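/- arXiv:1807.05869 — 4 statements merged into one kernel-verified Lean document; each statement's English description precedes it below -/
import Mathlib

section
/- Let A and B be graded Artinian algebras over a field k with symmetric Hilbert functions, and assume char k = 0 or char k > j_A + j_B. If x ∈ A_1 and y ∈ B_1 are strong Lefschetz elements for A and B respectively, then ℓ = x ⊗ 1 + 1 ⊗ y ∈ C_1 is a strong Lefschetz element for the tensor product algebra C = A ⊗_k B. -/
/-!
The proof is the representation theory of `sl₂`, arranged so that it works in characteristic `p`
larger than the socle degree of `C`.

An *adjoint* of a degree-one operator `E` on a graded space `W` concentrated in degrees `0, …, n`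
is a degree `-1` operator `F` such that `E F - F E` acts on `W i` as the scalar `2 i - n`.
If `E` has such an adjoint and `1, …, n` are invertible in `k`, then `E ^ (n - 2 i)` is injective
on `W i` (`lefschetz_injective`).  Exchanging the roles of `E` and `F` and reversing the grading,
`F ^ (n - 2 i)` is injective on `W (n - i)`, so `W i` and `W (n - i)` have the same dimension and
`E ^ (n - 2 i)` is a bijection between them; all maximal rank statements follow
(`maximal_rank`).

Conversely, if all the maps `E ^ (n - 2 i) : W i → W (n - i)` are bijective, an adjoint exists, in
any characteristic (`exists_adjoint`).  For `A` and `B` these maps are bijective because the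
Hilbert functions are symmetric and `x`, `y` are strong Lefschetz.  If `F_A`, `F_B` are the
resulting adjoints of multiplication by `x` and by `y`, then `F_A ⊗ 1 + 1 ⊗ F_B` is an adjoint of
multiplication by `x ⊗ 1 + 1 ⊗ y`, since the scalars `2 i - j_A` and `2 j - j_B` add up.
-/

/-- A linear form `ℓ` is strong Lefschetz for the graded algebra `A` with
grading `𝒜` if `ℓ ∈ 𝒜 1` and all multiplication maps `×ℓ^j : 𝒜 i → 𝒜 (i+j)`
have maximal rank. -/
def IsSL {k A : Type*} [Field k] [CommRing A] [Algebra k A]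
    (𝒜 : ℕ → Submodule k A) (ℓ : A) : Prop :=
  ℓ ∈ 𝒜 1 ∧ ∀ i j : ℕ,
    Module.finrank k ((𝒜 i).map (LinearMap.mulLeft k (ℓ ^ j))) =
      min (Module.finrank k (𝒜 i)) (Module.finrank k (𝒜 (i + j)))

open TensorProduct

/-- The grading on the tensor product `C = A ⊗_k B` of two graded algebras:
`C_d = ⊕_{i+j=d} A_i ⊗ B_j`. -/
noncomputable def tensorGrading {k A B : Type*} [Field k]
    [CommRing A] [Algebra k A] [CommRing B] [Algebra k B]
    (𝒜 : ℕ → Submodule k A) (ℬ : ℕ → Submodule k B) (d : ℕ) :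
    Submodule k (A ⊗[k] B) :=
  ⨆ (p : ℕ × ℕ) (_ : p.1 + p.2 = d),
    Submodule.map₂ (TensorProduct.mk k A B) (𝒜 p.1) (ℬ p.2)

/-! ### Operators with an adjoint have maximal rank -/

/-- The commutation formula of `sl₂`: how `F` moves past a power of `E`. -/
lemma adjoint_pow_comm {k V : Type*} [Field k] [AddCommGroup V] [Module k V]
    (W : ℕ → Submodule k V) (E F : V →ₗ[k] V) (n : ℕ)
    (hE : ∀ i, ∀ v ∈ W i, E v ∈ W (i + 1))
    (rel : ∀ i, ∀ v ∈ W i, E (F v) - F (E v) = (2 * (i : k) - n) • v)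
    (i : ℕ) (v : V) (hv : v ∈ W i) (q : ℕ) :
    F ((E ^ (q + 1)) v) =
      (E ^ (q + 1)) (F v) + (((q : k) + 1) * (n - 2 * i - q)) • (E ^ q) v := by
  have hpow : ∀ q, (E ^ q) v ∈ W (i + q) := by
    intro q
    induction q with
    | zero => simpa using hv
    | succ q ih => rw [pow_succ']; exact hE _ _ ih
  induction q with
  | zero =>
    have h := rel i v hv
    simp only [zero_add, pow_one, pow_zero, Module.End.one_apply, Nat.cast_zero]
    rw [sub_eq_iff_eq_add] at h
    rw [h]
    module
  | succ q ih =>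
    have h := rel _ _ (hpow (q + 1))
    have e1 : (E ^ (q + 1 + 1)) v = E ((E ^ (q + 1)) v) := by rw [pow_succ' E (q + 1)]; rfl
    have e2 : (E ^ (q + 1 + 1)) (F v) = E ((E ^ (q + 1)) (F v)) := by
      rw [pow_succ' E (q + 1)]; rfl
    have e3 : (E ^ (q + 1)) v = E ((E ^ q) v) := by rw [pow_succ' E q]; rfl
    rw [ih, map_add, map_smul, ← e3, ← e1, ← e2, sub_eq_iff_eq_add] at h
    have h' : F ((E ^ (q + 1 + 1)) v) = (E ^ (q + 1 + 1)) (F v)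
        + (((q : k) + 1) * (n - 2 * i - q)) • (E ^ (q + 1)) v
        - (2 * ((i + (q + 1) : ℕ) : k) - n) • (E ^ (q + 1)) v := by
      rw [h]; abel
    rw [h']
    push_cast
    module

/-- Induction on the degree `i`: if `E ^ (n - 2 i) v = 0`, the commutation formula shows that
`F v` is killed by `E ^ (n - 2 (i - 1))`, so `F v = 0`; the same formula then strips the powers of
`E` off `E ^ (n - 2 i) v = 0` one at a time. -/
lemma lefschetz_injective {k V : Type*} [Field k] [AddCommGroup V] [Module k V]
    (W : ℕ → Submodule k V) (E F : V →ₗ[k] V) (n : ℕ)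
    (hE : ∀ i, ∀ v ∈ W i, E v ∈ W (i + 1))
    (hF0 : ∀ v ∈ W 0, F v = 0)
    (hF : ∀ i, ∀ v ∈ W (i + 1), F v ∈ W i)
    (rel : ∀ i, ∀ v ∈ W i, E (F v) - F (E v) = (2 * (i : k) - n) • v)
    (hn : ∀ m : ℕ, 0 < m → m ≤ n → (m : k) ≠ 0)
    (i : ℕ) (m : ℕ) (hm : 2 * i + m = n) (v : V) (hv : v ∈ W i) (h : (E ^ m) v = 0) :
    v = 0 := by
  induction i generalizing m v with
  | zero =>
    have hFv := hF0 v hv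
    have key : ∀ q, q ≤ m → (E ^ q) v = 0 → v = 0 := by
      intro q
      induction q with
      | zero => intro _ h; simpa using h
      | succ q ih =>
        intro hq h0
        apply ih (by omega)
        have c := adjoint_pow_comm W E F n hE rel 0 v hv q
        rw [h0, hFv, map_zero, map_zero, zero_add] at c
        refine (smul_eq_zero.mp c.symm).resolve_left ?_
        have e : ((q : k) + 1) * (n - 2 * (0 : ℕ) - q) = ((q + 1 : ℕ) : k) * ((n - q : ℕ) : k) := by
          rw [Nat.cast_sub (by omega)]; push_cast; ring
        rw [e]
        exact mul_ne_zero (hn _ (by omega) (by omega)) (hn _ (by omega) (by omega))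
    exact key m le_rfl h
  | succ i IH =>
    have hFv : F v = 0 := by
      apply IH (m + 2) (by omega) _ (hF i v hv)
      have c := adjoint_pow_comm W E F n hE rel (i + 1) v hv (m + 1)
      have h1 : (E ^ (m + 1)) v = 0 := by rw [pow_succ', Module.End.mul_apply, h, map_zero]
      have h2 : (E ^ (m + 1 + 1)) v = 0 := by
        rw [pow_succ', Module.End.mul_apply, h1, map_zero]
      rw [h1, h2, map_zero, smul_zero, add_zero] at c
      exact c.symm
    have key : ∀ q, q ≤ m → (E ^ q) v = 0 → v = 0 := by
      intro q
      induction q with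
      | zero => intro _ h; simpa using h
      | succ q ih =>
        intro hq h0
        apply ih (by omega)
        have c := adjoint_pow_comm W E F n hE rel (i + 1) v hv q
        rw [h0, hFv, map_zero, map_zero, zero_add] at c
        refine (smul_eq_zero.mp c.symm).resolve_left ?_
        have e : ((q : k) + 1) * (n - 2 * (i + 1 : ℕ) - q)
            = ((q + 1 : ℕ) : k) * ((m - q : ℕ) : k) := by
          rw [Nat.cast_sub (by omega), ← hm]; push_cast; ring
        rw [e]
        exact mul_ne_zero (hn _ (by omega) (by omega)) (hn _ (by omega) (by omega))
    exact key m le_rfl h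

lemma pow_mem_shift {k V : Type*} [Field k] [AddCommGroup V] [Module k V]
    (W : ℕ → Submodule k V) (E : V →ₗ[k] V)
    (hE : ∀ i, ∀ v ∈ W i, E v ∈ W (i + 1)) (i q : ℕ) (v : V) (hv : v ∈ W i) :
    (E ^ q) v ∈ W (i + q) := by
  induction q with
  | zero => simpa using hv
  | succ q ih => rw [pow_succ']; exact hE _ _ ih

lemma finrank_map_of_inj {k V : Type*} [Field k] [AddCommGroup V] [Module k V]
    (U : Submodule k V) (f : V →ₗ[k] V) (h : ∀ v ∈ U, f v = 0 → v = 0) :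
    Module.finrank k (U.map f) = Module.finrank k U := by
  have e : U.map f = LinearMap.range (f ∘ₗ U.subtype) := by
    rw [LinearMap.range_comp, Submodule.range_subtype]
  rw [e]
  apply LinearMap.finrank_range_of_inj
  rw [← LinearMap.ker_eq_bot, LinearMap.ker_eq_bot']
  intro u hu
  exact Subtype.ext (h u u.2 hu)

/-- An operator with an adjoint has maximal rank in all its powers, between all degrees. -/
lemma maximal_rank {k V : Type*} [Field k] [AddCommGroup V] [Module k V] [FiniteDimensional k V]
    (W : ℕ → Submodule k V) (E F : V →ₗ[k] V) (n : ℕ)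
    (hE : ∀ i, ∀ v ∈ W i, E v ∈ W (i + 1))
    (hF0 : ∀ v ∈ W 0, F v = 0)
    (hF : ∀ i, ∀ v ∈ W (i + 1), F v ∈ W i)
    (hW : ∀ i, n < i → W i = ⊥)
    (rel : ∀ i, ∀ v ∈ W i, E (F v) - F (E v) = (2 * (i : k) - n) • v)
    (hn : ∀ m : ℕ, 0 < m → m ≤ n → (m : k) ≠ 0) (i j : ℕ) :
    Module.finrank k ((W i).map (E ^ j)) =
      min (Module.finrank k (W i)) (Module.finrank k (W (i + j))) := by
  have hle : (W i).map (E ^ j) ≤ W (i + j) := by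
    rintro _ ⟨v, hv, rfl⟩
    exact pow_mem_shift W E hE i j v hv
  have hle1 := Submodule.finrank_mono hle
  have hle2 := Submodule.finrank_map_le (E ^ j) (W i)
  by_cases hij : 2 * i + j ≤ n
  · have h : Module.finrank k ((W i).map (E ^ j)) = Module.finrank k (W i) := by
      apply finrank_map_of_inj
      intro v hv h0
      apply lefschetz_injective W E F n hE hF0 hF rel hn i (n - 2 * i) (by omega) v hv
      rw [show n - 2 * i = (n - 2 * i - j) + j by omega, pow_add, Module.End.mul_apply, h0,
        map_zero]
    omega
  by_cases hn' : i + j ≤ n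
  · obtain ⟨q, hq⟩ : ∃ q, q + (i + j) = n := ⟨n - (i + j), by omega⟩
    -- The grading is reversed, so that `F` raises the degree and `E` lowers it.
    have hrev : ∀ v ∈ W (i + j), (F ^ (j + (i - q))) v = 0 → v = 0 := by
      intro v hv h0
      let W' : ℕ → Submodule k V := fun a => if a ≤ n then W (n - a) else ⊥
      have hpos : ∀ a, a ≤ n → W' a = W (n - a) := fun a ha => if_pos ha
      have hneg : ∀ a, ¬ a ≤ n → W' a = ⊥ := fun a ha => if_neg ha
      refine lefschetz_injective W' F E n ?_ ?_ ?_ ?_ hn q (j + (i - q)) (by omega) v ?_ h0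
      · intro a u hu
        rcases lt_trichotomy a n with ha | ha | ha
        · rw [hpos _ (by omega)] at hu ⊢
          rw [show n - a = (n - (a + 1)) + 1 by omega] at hu
          exact hF _ _ hu
        · rw [hpos _ (by omega), ha, Nat.sub_self] at hu
          rw [hF0 u hu]; exact zero_mem _
        · rw [hneg _ (by omega), Submodule.mem_bot] at hu
          rw [hu, map_zero]; exact zero_mem _
      · intro u hu
        rw [hpos _ (by omega), Nat.sub_zero] at hu
        have := hE _ _ hu
        rwa [hW _ (by omega), Submodule.mem_bot] at this
      · intro a u hu
        by_cases ha : a + 1 ≤ n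
        · rw [hpos _ (by omega)] at hu ⊢
          have := hE _ _ hu
          rwa [show n - (a + 1) + 1 = n - a by omega] at this
        · rw [hneg _ (by omega), Submodule.mem_bot] at hu
          rw [hu, map_zero]; exact zero_mem _
      · intro a u hu
        by_cases ha : a ≤ n
        · rw [hpos _ ha] at hu
          have := rel _ _ hu
          rw [← neg_sub, this, Nat.cast_sub ha]
          module
        · rw [hneg _ ha, Submodule.mem_bot] at hu
          simp [hu]
      · rw [hpos _ (by omega), show n - q = i + j by omega]; exact hv
    have hFle : (W (i + j)).map (F ^ (j + (i - q))) ≤ W q := by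
      have aux : ∀ r, ∀ a v, v ∈ W (a + r) → (F ^ r) v ∈ W a := by
        intro r
        induction r with
        | zero => intro a v hv; simpa using hv
        | succ r ih =>
          intro a v hv
          rw [pow_succ, Module.End.mul_apply]
          exact ih a _ (hF _ _ hv)
      rintro _ ⟨v, hv, rfl⟩
      apply aux
      rw [show q + (j + (i - q)) = i + j by omega]; exact hv
    have d1 := Submodule.finrank_mono hFle
    rw [finrank_map_of_inj _ _ hrev] at d1
    have d2 : Module.finrank k ((W q).map (E ^ (j + (i - q)))) = Module.finrank k (W q) :=
      finrank_map_of_inj _ _ fun v hv h0 =>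
        lefschetz_injective W E F n hE hF0 hF rel hn q _ (by omega) v hv h0
    have hle3 : (W q).map (E ^ (j + (i - q))) ≤ (W i).map (E ^ j) := by
      rintro _ ⟨v, hv, rfl⟩
      refine ⟨(E ^ (i - q)) v, ?_, ?_⟩
      · have := pow_mem_shift W E hE q (i - q) v hv
        rwa [show q + (i - q) = i by omega] at this
      · rw [pow_add, Module.End.mul_apply]
    have d3 := Submodule.finrank_mono hle3
    omega
  · have h0 : Module.finrank k (W (i + j)) = 0 := by
      rw [hW _ (by omega)]; exact finrank_bot k V
    omega

/-! ### Existence of adjoints -/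

/-- A degree-one operator whose powers `E ^ (n - 2 i) : W i → W (n - i)` are bijective has an
adjoint, given here by one operator `h i` for each degree `i`. -/
lemma exists_adjoint {k V : Type*} [Field k] [AddCommGroup V] [Module k V]
    (W : ℕ → Submodule k V) (E : V →ₗ[k] V) (n : ℕ)
    (hE : ∀ i, ∀ v ∈ W i, E v ∈ W (i + 1))
    (hW : ∀ i, n < i → W i = ⊥)
    (hinj : ∀ i, 2 * i ≤ n → ∀ v ∈ W i, (E ^ (n - 2 * i)) v = 0 → v = 0)
    (hsurj : ∀ i, 2 * i ≤ n → ∀ w ∈ W (n - i), ∃ v ∈ W i, (E ^ (n - 2 * i)) v = w) :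
    ∃ h : ℕ → V →ₗ[k] V, (∀ v ∈ W 0, h 0 v = 0) ∧ (∀ i, ∀ v ∈ W (i + 1), h (i + 1) v ∈ W i) ∧
      ∀ i, ∀ v ∈ W i, E (h i v) - h (i + 1) (E v) = (2 * (i : k) - n) • v := by
  -- `g i` inverts `E ^ (n - 2 i) : W i → W (n - i)`.
  have hg : ∀ i, ∃ g : V →ₗ[k] V, 2 * i ≤ n → (∀ w, g w ∈ W i) ∧
      (∀ v ∈ W i, g ((E ^ (n - 2 * i)) v) = v) ∧
      (∀ w ∈ W (n - i), (E ^ (n - 2 * i)) (g w) = w) := by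
    intro i
    by_cases hi : 2 * i ≤ n
    · obtain ⟨g, hg⟩ := LinearMap.exists_leftInverse_of_injective
        ((E ^ (n - 2 * i)) ∘ₗ (W i).subtype) (by
          rw [LinearMap.ker_eq_bot']
          intro u hu
          exact Subtype.ext (hinj i hi u u.2 hu))
      have hg' : ∀ v (hv : v ∈ W i), g ((E ^ (n - 2 * i)) v) = ⟨v, hv⟩ := fun v hv =>
        LinearMap.congr_fun hg ⟨v, hv⟩
      refine ⟨(W i).subtype ∘ₗ g, fun _ => ⟨fun w => (g w).2, ?_, ?_⟩⟩
      · intro v hv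
        simp [hg' v hv]
      · intro w hw
        obtain ⟨v, hv, rfl⟩ := hsurj i hi w hw
        simp [hg' v hv]
    · exact ⟨0, fun h => absurd h hi⟩
  choose g hg using hg
  -- The adjoint in degrees `≤ n / 2`: in degree `i + 1` it vanishes on the primitive part
  -- `ker E ^ (n - 2 i - 1)`, and the commutation relation prescribes it on the complement `E (W i)`.
  let f : ℕ → V →ₗ[k] V := fun i => Nat.rec 0
    (fun i fi => (E ∘ₗ fi - (2 * (i : k) - n) • LinearMap.id) ∘ₗ g i ∘ₗ (E ^ (n - 2 * i - 1))) i
  have f0 : f 0 = 0 := rfl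
  have fs : ∀ i v, f (i + 1) v = E (f i (g i ((E ^ (n - 2 * i - 1)) v)))
      - (2 * (i : k) - n) • g i ((E ^ (n - 2 * i - 1)) v) := fun i v => rfl
  clear_value f
  have fmem : ∀ i, 2 * (i + 1) ≤ n → ∀ v, f (i + 1) v ∈ W i := by
    intro i
    induction i with
    | zero =>
      intro hi v
      rw [fs, f0]
      simp only [LinearMap.zero_apply, map_zero, zero_sub]
      exact neg_mem (Submodule.smul_mem _ _ ((hg 0 (by omega)).1 _))
    | succ i ih =>
      intro hi v
      rw [fs]
      exact sub_mem (hE _ _ (ih (by omega) _))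
        (Submodule.smul_mem _ _ ((hg (i + 1) (by omega)).1 _))
  -- In degree `n - i` the value is dictated by the commutation formula for `E ^ (n - 2 i)`.
  let h : ℕ → V →ₗ[k] V := fun d =>
    if 2 * d ≤ n then f d else
      ((E ^ (2 * d - n)) ∘ₗ f (n - d) + ((2 * d - n : ℕ) : k) • (E ^ (2 * d - n - 1)))
        ∘ₗ g (n - d)
  have hlow : ∀ d, 2 * d ≤ n → h d = f d := fun d hd => if_pos hd
  have hup : ∀ i, 2 * i ≤ n → ∀ u ∈ W i, h (n - i) ((E ^ (n - 2 * i)) u) =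
      (E ^ (n - 2 * i)) (f i u) + ((n - 2 * i : ℕ) : k) • (E ^ (n - 2 * i - 1)) u := by
    intro i hi u hu
    by_cases hi' : 2 * i = n
    · rw [hlow _ (by omega), show n - 2 * i = 0 by omega, show n - i = i by omega]
      simp
    · have : h (n - i) = _ := if_neg (by omega)
      rw [this, show n - (n - i) = i by omega, show 2 * (n - i) - n = n - 2 * i by omega]
      simp [(hg i hi).2.1 u hu]
  clear_value h
  refine ⟨h, ?_, ?_, ?_⟩
  · intro v _
    rw [hlow 0 (by omega), f0]; rfl
  · intro d v hv
    by_cases hd : 2 * (d + 1) ≤ n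
    · rw [hlow _ hd]; exact fmem d hd v
    by_cases hd' : d + 1 ≤ n
    · obtain ⟨i, hi⟩ : ∃ i, i + (d + 1) = n := ⟨n - (d + 1), by omega⟩
      have hdi : d + 1 = n - i := by omega
      rw [hdi] at hv ⊢
      obtain ⟨u, hu, rfl⟩ := hsurj i (by omega) v hv
      rw [hup i (by omega) u hu]
      apply add_mem
      · cases i with
        | zero => rw [f0]; simp
        | succ i =>
          have := pow_mem_shift W E hE i (n - 2 * (i + 1)) _ (fmem i (by omega) u)
          rwa [show i + (n - 2 * (i + 1)) = d by omega] at this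
      · apply Submodule.smul_mem
        have := pow_mem_shift W E hE i (n - 2 * i - 1) _ hu
        rwa [show i + (n - 2 * i - 1) = d by omega] at this
    · rw [hW _ (by omega), Submodule.mem_bot] at hv
      rw [hv, map_zero]; exact zero_mem _
  · intro d v hv
    by_cases hd : 2 * (d + 1) ≤ n
    · rw [hlow _ hd, hlow d (by omega), fs]
      have e : (E ^ (n - 2 * d - 1)) (E v) = (E ^ (n - 2 * d)) v := by
        rw [← Module.End.mul_apply, ← pow_succ, show n - 2 * d - 1 + 1 = n - 2 * d by omega]
      rw [e, (hg d (by omega)).2.1 v hv]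
      abel
    by_cases hd1 : 2 * d + 1 = n
    · -- the step across the middle, from degree `(n - 1) / 2` to `(n + 1) / 2`
      have := hup d (by omega) v hv
      rw [show n - 2 * d = 1 by omega, show n - d = d + 1 by omega] at this
      simp only [pow_one, Nat.sub_self, pow_zero, Module.End.one_apply, Nat.cast_one] at this
      rw [this, hlow d (by omega), ← hd1]
      push_cast
      module
    by_cases hd' : d ≤ n
    · obtain ⟨i, hi⟩ : ∃ i, i + d = n := ⟨n - d, by omega⟩
      obtain ⟨m, hm⟩ : ∃ m, 2 * i + m = n := ⟨n - 2 * i, by omega⟩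
      have hdi : d = n - i := by omega
      have hw : v ∈ W (n - i) := hdi ▸ hv
      obtain ⟨u, hu, rfl⟩ := hsurj i (by omega) v hw
      have e1 := hup i (by omega) u hu
      rw [← hdi, show n - 2 * i = m by omega] at e1
      rw [show n - 2 * i = m by omega, e1]
      have hcoef : (2 * (d : k) - n) = m := by
        have hnat : 2 * d = m + n := by omega
        have hcast := congrArg (Nat.cast : ℕ → k) hnat
        push_cast at hcast
        rw [hcast]; ring
      have hEm : (m : k) • E ((E ^ (m - 1)) u) = (m : k) • (E ^ m) u := by
        rcases Nat.eq_zero_or_pos m with h0 | h0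
        · simp [h0]
        · rw [← Module.End.mul_apply, ← pow_succ', Nat.sub_add_cancel h0]
      rw [map_add, map_smul, hEm, hcoef, ← Module.End.mul_apply E, ← Module.End.mul_apply E,
        ← pow_succ']
      cases i with
      | zero =>
        have h0 : (E ^ (m + 1)) u = 0 := by
          have := pow_mem_shift W E hE 0 (m + 1) u hu
          rwa [hW _ (by omega), Submodule.mem_bot] at this
        rw [h0, f0]; simp
      | succ i =>
        -- `u'` is the component of `u` in `E (W i)`; `u - E u'` is primitive.
        obtain ⟨u', hu', hE'⟩ : ∃ u' ∈ W i, (E ^ (m + 2)) u' = (E ^ (m + 1)) u := by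
          have := hsurj i (by omega) ((E ^ (m + 1)) u) (by
            have := pow_mem_shift W E hE (i + 1) (m + 1) u hu
            rwa [show i + 1 + (m + 1) = n - i by omega] at this)
          rwa [show n - 2 * i = m + 2 by omega] at this
        have e2 := hup i (by omega) u' hu'
        rw [show n - 2 * i = m + 2 by omega, hE', show n - i = d + 1 by omega,
          show m + 2 - 1 = m + 1 by omega] at e2
        have e3 : f (i + 1) u = E (f i u') + ((m + 2 : ℕ) : k) • u' := by
          have hgu : g i ((E ^ (n - 2 * i - 1)) u) = u' := by
            rw [show n - 2 * i - 1 = m + 1 by omega, ← hE', show m + 2 = n - 2 * i by omega]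
            exact (hg i (by omega)).2.1 u' hu'
          rw [fs, hgu, ← hm]
          push_cast
          module
        rw [e2, e3, map_add, map_smul, ← Module.End.mul_apply (E ^ (m + 1)) E, ← pow_succ]
        abel
    · rw [hW _ (by omega), Submodule.mem_bot] at hv
      simp [hv]

/-- Multiplication by a strong Lefschetz element of a graded algebra with symmetric Hilbert
function has an adjoint. -/
lemma exists_adjoint_of_isSL {k A : Type*} [Field k] [CommRing A] [Algebra k A]
    (𝒜 : ℕ → Submodule k A) [GradedAlgebra 𝒜] [FiniteDimensional k A]
    (n : ℕ) (hn : ∀ i, n < i → 𝒜 i = ⊥)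
    (hsymm : ∀ i, i ≤ n → Module.finrank k (𝒜 i) = Module.finrank k (𝒜 (n - i)))
    (x : A) (hx : IsSL 𝒜 x) :
    ∃ F : A →ₗ[k] A, (∀ v ∈ 𝒜 0, F v = 0) ∧ (∀ i, ∀ v ∈ 𝒜 (i + 1), F v ∈ 𝒜 i) ∧
      ∀ i, ∀ v ∈ 𝒜 i, x * F v - F (x * v) = (2 * (i : k) - n) • v := by
  have hE : ∀ i, ∀ v ∈ 𝒜 i, LinearMap.mulLeft k x v ∈ 𝒜 (i + 1) := by
    intro i v hv
    rw [add_comm]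
    exact SetLike.mul_mem_graded hx.1 hv
  have hmap : ∀ i, 2 * i ≤ n →
      Module.finrank k ((𝒜 i).map (LinearMap.mulLeft k x ^ (n - 2 * i)))
        = Module.finrank k (𝒜 i) := by
    intro i hi
    have := hx.2 i (n - 2 * i)
    rw [show i + (n - 2 * i) = n - i by omega, ← hsymm i (by omega), min_self] at this
    rwa [LinearMap.pow_mulLeft]
  obtain ⟨h, h0, h1, h2⟩ := exists_adjoint 𝒜 (LinearMap.mulLeft k x) n hE hn (by
      intro i hi v hv h0
      have hr : LinearMap.range ((LinearMap.mulLeft k x ^ (n - 2 * i)) ∘ₗ (𝒜 i).subtype)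
          = (𝒜 i).map (LinearMap.mulLeft k x ^ (n - 2 * i)) := by
        rw [LinearMap.range_comp, Submodule.range_subtype]
      have hrk := LinearMap.finrank_range_add_finrank_ker
        ((LinearMap.mulLeft k x ^ (n - 2 * i)) ∘ₗ (𝒜 i).subtype)
      rw [hr, hmap i hi] at hrk
      have hk := Submodule.finrank_eq_zero.mp (Nat.add_eq_left.mp hrk)
      exact congrArg Subtype.val (LinearMap.ker_eq_bot'.mp hk ⟨v, hv⟩ h0)) (by
      intro i hi w hw
      have hle : (𝒜 i).map (LinearMap.mulLeft k x ^ (n - 2 * i)) ≤ 𝒜 (n - i) := by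
        rintro _ ⟨v, hv, rfl⟩
        have := pow_mem_shift 𝒜 _ hE i (n - 2 * i) v hv
        rwa [show i + (n - 2 * i) = n - i by omega] at this
      have := Submodule.eq_of_le_of_finrank_eq hle
        ((hmap i hi).trans (hsymm i (by omega)))
      rw [← this] at hw
      exact hw)
  -- the operators of the separate degrees are glued along the grading
  let F : A →ₗ[k] A := ∑ i ∈ Finset.range (n + 1), h i ∘ₗ GradedAlgebra.proj 𝒜 i
  have hF : ∀ i, ∀ v ∈ 𝒜 i, F v = h i v := by
    intro i v hv
    by_cases hi : i ≤ n
    · simp only [F, LinearMap.sum_apply, LinearMap.comp_apply, GradedAlgebra.proj_apply]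
      rw [Finset.sum_eq_single i]
      · rw [DirectSum.decompose_of_mem_same 𝒜 hv]
      · intro b _ hb
        rw [DirectSum.decompose_of_mem_ne 𝒜 hv (Ne.symm hb), map_zero]
      · intro hb
        exact absurd (Finset.mem_range.mpr (by omega)) hb
    · rw [hn _ (by omega), Submodule.mem_bot] at hv
      simp [hv]
  refine ⟨F, ?_, ?_, ?_⟩
  · intro v hv
    rw [hF 0 v hv, h0 v hv]
  · intro i v hv
    rw [hF _ v hv]; exact h1 i v hv
  · intro i v hv
    have := h2 i v hv
    rw [hF i v hv, hF (i + 1) (x * v) (hE i v hv)]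
    exact this

/-! ### The tensor product -/

lemma tmul_mem_tensorGrading {k A B : Type*} [Field k]
    [CommRing A] [Algebra k A] [CommRing B] [Algebra k B]
    (𝒜 : ℕ → Submodule k A) (ℬ : ℕ → Submodule k B) {i j d : ℕ} (hd : i + j = d)
    {a : A} {b : B} (ha : a ∈ 𝒜 i) (hb : b ∈ ℬ j) : a ⊗ₜ[k] b ∈ tensorGrading 𝒜 ℬ d :=
  Submodule.mem_iSup_of_mem (i, j) (Submodule.mem_iSup_of_mem hd
    (Submodule.apply_mem_map₂ (TensorProduct.mk k A B) ha hb))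

lemma tensorGrading_le {k A B : Type*} [Field k]
    [CommRing A] [Algebra k A] [CommRing B] [Algebra k B]
    (𝒜 : ℕ → Submodule k A) (ℬ : ℕ → Submodule k B) (d : ℕ) (S : Submodule k (A ⊗[k] B))
    (h : ∀ i j, i + j = d → ∀ a ∈ 𝒜 i, ∀ b ∈ ℬ j, a ⊗ₜ[k] b ∈ S) :
    tensorGrading 𝒜 ℬ d ≤ S :=
  iSup_le fun p => iSup_le fun hp => Submodule.map₂_le.mpr fun a ha b hb => h p.1 p.2 hp a ha b hb

/-- The sum of adjoints on the two factors is an adjoint on the tensor product, so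
`x ⊗ 1 + 1 ⊗ y` has maximal rank in all its powers.  The operators `E` and `H` on `A ⊗ B` stand for
multiplication by `x ⊗ 1 + 1 ⊗ y` and for `F ⊗ 1 + 1 ⊗ G`. -/
lemma tensor_maximal_rank {k A B : Type*} [Field k]
    [CommRing A] [Algebra k A] [CommRing B] [Algebra k B]
    [FiniteDimensional k A] [FiniteDimensional k B]
    (𝒜 : ℕ → Submodule k A) (ℬ : ℕ → Submodule k B) (jA jB : ℕ)
    (hjA' : ∀ i, jA < i → 𝒜 i = ⊥) (hjB' : ∀ i, jB < i → ℬ i = ⊥) (x : A) (y : B)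
    (hxA : ∀ i, ∀ a ∈ 𝒜 i, x * a ∈ 𝒜 (i + 1)) (hyB : ∀ i, ∀ b ∈ ℬ i, y * b ∈ ℬ (i + 1))
    (F : A →ₗ[k] A) (G : B →ₗ[k] B)
    (F0 : ∀ v ∈ 𝒜 0, F v = 0) (F1 : ∀ i, ∀ v ∈ 𝒜 (i + 1), F v ∈ 𝒜 i)
    (F2 : ∀ i, ∀ v ∈ 𝒜 i, x * F v - F (x * v) = (2 * (i : k) - jA) • v)
    (G0 : ∀ v ∈ ℬ 0, G v = 0) (G1 : ∀ i, ∀ v ∈ ℬ (i + 1), G v ∈ ℬ i)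
    (G2 : ∀ i, ∀ v ∈ ℬ i, y * G v - G (y * v) = (2 * (i : k) - jB) • v)
    (E H : A ⊗[k] B →ₗ[k] A ⊗[k] B)
    (hEt : ∀ a b, E (a ⊗ₜ[k] b) = (x * a) ⊗ₜ[k] b + a ⊗ₜ[k] (y * b))
    (hHt : ∀ a b, H (a ⊗ₜ[k] b) = F a ⊗ₜ[k] b + a ⊗ₜ[k] G b)
    (hn : ∀ m : ℕ, 0 < m → m ≤ jA + jB → (m : k) ≠ 0) (i j : ℕ) :
    Module.finrank k ((tensorGrading 𝒜 ℬ i).map (E ^ j)) =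
      min (Module.finrank k (tensorGrading 𝒜 ℬ i))
        (Module.finrank k (tensorGrading 𝒜 ℬ (i + j))) := by
  refine maximal_rank (tensorGrading 𝒜 ℬ) E H (jA + jB) ?_ ?_ ?_ ?_ ?_ hn i j
  · intro d
    refine tensorGrading_le 𝒜 ℬ d ((tensorGrading 𝒜 ℬ (d + 1)).comap E) ?_
    intro p q hpq a ha b hb
    rw [Submodule.mem_comap, hEt]
    exact add_mem (tmul_mem_tensorGrading 𝒜 ℬ (by omega) (hxA p a ha) hb)
      (tmul_mem_tensorGrading 𝒜 ℬ (by omega) ha (hyB q b hb))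
  · refine tensorGrading_le 𝒜 ℬ 0 (LinearMap.ker H) ?_
    intro p q hpq a ha b hb
    obtain ⟨rfl, rfl⟩ : p = 0 ∧ q = 0 := by omega
    rw [LinearMap.mem_ker, hHt, F0 a ha, G0 b hb, TensorProduct.zero_tmul,
      TensorProduct.tmul_zero, add_zero]
  · intro d
    refine tensorGrading_le 𝒜 ℬ (d + 1) ((tensorGrading 𝒜 ℬ d).comap H) ?_
    intro p q hpq a ha b hb
    rw [Submodule.mem_comap, hHt]
    apply add_mem
    · cases p with
      | zero => rw [F0 a ha, TensorProduct.zero_tmul]; exact zero_mem _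
      | succ p => exact tmul_mem_tensorGrading 𝒜 ℬ (by omega) (F1 p a ha) hb
    · cases q with
      | zero => rw [G0 b hb, TensorProduct.tmul_zero]; exact zero_mem _
      | succ q => exact tmul_mem_tensorGrading 𝒜 ℬ (by omega) ha (G1 q b hb)
  · intro d hd
    refine le_bot_iff.mp (tensorGrading_le 𝒜 ℬ d ⊥ ?_)
    intro p q hpq a ha b hb
    rw [Submodule.mem_bot]
    by_cases hp : jA < p
    · rw [hjA' p hp, Submodule.mem_bot] at ha
      rw [ha, TensorProduct.zero_tmul]
    · rw [hjB' q (by omega), Submodule.mem_bot] at hb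
      rw [hb, TensorProduct.tmul_zero]
  · intro d v hv
    have hle := tensorGrading_le 𝒜 ℬ d
      (LinearMap.ker (E ∘ₗ H - H ∘ₗ E - (2 * (d : k) - ((jA + jB : ℕ) : k)) • LinearMap.id)) (by
        intro p q hpq a ha b hb
        have e1 := F2 p a ha
        have e2 := G2 q b hb
        rw [sub_eq_iff_eq_add] at e1 e2
        simp only [LinearMap.mem_ker, LinearMap.sub_apply, LinearMap.comp_apply,
          LinearMap.smul_apply, LinearMap.id_apply, hEt, hHt, map_add, e1, e2,
          TensorProduct.add_tmul, TensorProduct.tmul_add, TensorProduct.tmul_smul,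
          ← TensorProduct.smul_tmul']
        rw [← hpq]
        push_cast
        module)
    have := hle hv
    rw [LinearMap.mem_ker] at this
    exact sub_eq_zero.mp this

/-- Let `A` and `B` be graded Artinian algebras over a field `k` with symmetric
Hilbert functions, and assume `char k = 0` or `char k > j_A + j_B`.  If
`x ∈ A_1` and `y ∈ B_1` are strong Lefschetz elements for `A` and `B`
respectively, then `ℓ = x ⊗ 1 + 1 ⊗ y ∈ C_1` is a strong Lefschetz element for
the tensor product algebra `C = A ⊗_k B`. -/
theorem strongLefschetz_tensor_product
    {k A B : Type} [Field k] [CommRing A] [Algebra k A] [CommRing B] [Algebra k B]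
    (𝒜 : ℕ → Submodule k A) [GradedAlgebra 𝒜] [FiniteDimensional k A]
    (hconnA : 𝒜 0 = Submodule.span k {(1 : A)})
    (ℬ : ℕ → Submodule k B) [GradedAlgebra ℬ] [FiniteDimensional k B]
    (hconnB : ℬ 0 = Submodule.span k {(1 : B)})
    (jA jB : ℕ) (hjA : 𝒜 jA ≠ ⊥) (hjA' : ∀ i, jA < i → 𝒜 i = ⊥)
    (hjB : ℬ jB ≠ ⊥) (hjB' : ∀ i, jB < i → ℬ i = ⊥)
    (hsymmA : ∀ i, i ≤ jA →
      Module.finrank k (𝒜 i) = Module.finrank k (𝒜 (jA - i)))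
    (hsymmB : ∀ i, i ≤ jB →
      Module.finrank k (ℬ i) = Module.finrank k (ℬ (jB - i)))
    (hchar : ringChar k = 0 ∨ jA + jB < ringChar k)
    (x : A) (y : B) (hx : IsSL 𝒜 x) (hy : IsSL ℬ y) :
    IsSL (tensorGrading 𝒜 ℬ) ((x ⊗ₜ[k] (1 : B)) + ((1 : A) ⊗ₜ[k] y)) := by
  have h1A : (1 : A) ∈ 𝒜 0 := SetLike.one_mem_graded 𝒜
  have h1B : (1 : B) ∈ ℬ 0 := SetLike.one_mem_graded ℬ
  obtain ⟨F, F0, F1, F2⟩ := exists_adjoint_of_isSL 𝒜 jA hjA' hsymmA x hx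
  obtain ⟨G, G0, G1, G2⟩ := exists_adjoint_of_isSL ℬ jB hjB' hsymmB y hy
  have hx1 : x ⊗ₜ[k] (1 : B) ∈ tensorGrading 𝒜 ℬ 1 :=
    tmul_mem_tensorGrading 𝒜 ℬ (add_zero 1) hx.1 h1B
  have hy1 : (1 : A) ⊗ₜ[k] y ∈ tensorGrading 𝒜 ℬ 1 :=
    tmul_mem_tensorGrading 𝒜 ℬ (zero_add 1) h1A hy.1
  refine ⟨Submodule.add_mem _ hx1 hy1, ?_⟩
  have hxA : ∀ i, ∀ a ∈ 𝒜 i, x * a ∈ 𝒜 (i + 1) := by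
    intro i a ha
    rw [add_comm]
    exact SetLike.mul_mem_graded hx.1 ha
  have hyB : ∀ i, ∀ b ∈ ℬ i, y * b ∈ ℬ (i + 1) := by
    intro i b hb
    rw [add_comm]
    exact SetLike.mul_mem_graded hy.1 hb
  have hn : ∀ m : ℕ, 0 < m → m ≤ jA + jB → (m : k) ≠ 0 := by
    intro m hm hmn h0
    have hdvd := (ringChar.spec k m).mp h0
    rcases hchar with h | h
    · rw [h, zero_dvd_iff] at hdvd
      omega
    · have := Nat.le_of_dvd hm hdvd
      omega
  intro i j
  have key := tensor_maximal_rank 𝒜 ℬ jA jB hjA' hjB' x y hxA hyB F G F0 F1 F2 G0 G1 G2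
    (LinearMap.mulLeft k ((x ⊗ₜ[k] (1 : B)) + ((1 : A) ⊗ₜ[k] y)))
    (TensorProduct.map F LinearMap.id + TensorProduct.map LinearMap.id G)
    (fun a b => by
      rw [LinearMap.mulLeft_apply, add_mul, Algebra.TensorProduct.tmul_mul_tmul,
        Algebra.TensorProduct.tmul_mul_tmul, one_mul, one_mul])
    (fun a b => by
      rw [LinearMap.add_apply, TensorProduct.map_tmul, TensorProduct.map_tmul]
      rfl) hn i j
  rw [LinearMap.pow_mulLeft] at key
  exact key
end

section
/- Let A, B, C be graded Artinian algebras over a field k with degree-preserving algebra homomorphisms ι : A → C and π : C → B, where π is surjective and ker(π) = ι(m_A)·C (the ideal of C generated by the image of the maximal graded ideal of A). Then C is a free A-module via ι if and only if dim_k C = dim_k A · dim_k B; in this case C is a free extension with base A and fiber B. -/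
/-!
Write `m = ⨁_{i ≥ 1} A_i`.  Positive-degree elements of `A` are nilpotent
(`gradedMaxSet_subset_nilradical`), so the ideal generated by `m` lies in the Jacobson radical, and
`A = k·1 + m` because `A_0 = k·1` (`exists_sub_algebraMap_mem`).

Lift a `k`-basis of `B` to a family `v` in `C`.  As `ker π = m·C`, the family generates `C` modulo
`m·C`, hence generates `C` over `A` by Nakayama (`span_lift_eq_top`).  This gives a surjection
`A^r → C` with `r = dim B`.

* If `dim C = dim A · dim B`, both sides of the surjection have the same dimension over `k`, so it
  is an isomorphism and `C` is free.
* If `C` is free of rank `n` over `A`, then `dim C = dim A · n`.  The surjection gives `n ≤ r`, and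
  `r ≤ n` because `π` maps an `A`-basis of `C` to a `k`-spanning family of `B`: scalars in `m` act
  as zero on `B`, so only their constant terms matter (`span_image_eq_top`).
-/

/-- The maximal graded ideal `m_A = ⊕_{i ≥ 1} A_i` of a graded algebra, as a
set of elements. -/
def gradedMaxSet {k A : Type*} [Field k] [CommRing A] [Algebra k A]
    (𝒜 : ℕ → Submodule k A) : Set A :=
  (⨆ i : ℕ, 𝒜 (i + 1) : Submodule k A)

/-- A finite-dimensional grading has only finitely many nonzero components, so the powers of an
element of positive degree eventually vanish. -/
theorem gradedMaxSet_subset_nilradical {k A : Type*} [Field k] [CommRing A] [Algebra k A]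
    (𝒜 : ℕ → Submodule k A) [GradedAlgebra 𝒜] [FiniteDimensional k A] :
    gradedMaxSet 𝒜 ⊆ nilradical A := by
  have key : (⨆ i : ℕ, 𝒜 (i + 1) : Submodule k A) ≤ (nilradical A).restrictScalars k := by
    refine iSup_le fun i x hx => ?_
    rw [Submodule.restrictScalars_mem, mem_nilradical]
    have hfin : {j | 𝒜 j ≠ ⊥}.Finite :=
      WellFoundedGT.finite_ne_bot_of_iSupIndep
        (DirectSum.Decomposition.isInternal 𝒜).submodule_iSupIndep
    have hinj : Function.Injective fun n : ℕ => n * (i + 1) :=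
      mul_left_injective₀ (Nat.succ_ne_zero i)
    obtain ⟨n, hn⟩ := (hfin.preimage hinj.injOn).exists_notMem
    have hbot : 𝒜 (n * (i + 1)) = ⊥ := by simpa using hn
    have hpow : x ^ n ∈ 𝒜 (n * (i + 1)) := by
      simpa using SetLike.pow_mem_graded n hx
    rw [hbot, Submodule.mem_bot] at hpow
    exact ⟨n, hpow⟩
  exact key

theorem exists_sub_algebraMap_mem {k A : Type*} [Field k] [CommRing A] [Algebra k A]
    (𝒜 : ℕ → Submodule k A) [GradedAlgebra 𝒜]
    (hconnA : 𝒜 0 = Submodule.span k {(1 : A)}) (a : A) :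
    ∃ c : k, a - algebraMap k A c ∈ gradedMaxSet 𝒜 := by
  have ha : a ∈ 𝒜 0 ⊔ ⨆ i : ℕ, 𝒜 (i + 1) := by
    rw [sup_iSup_nat_succ, (DirectSum.Decomposition.isInternal 𝒜).submodule_iSup_eq_top]
    trivial
  obtain ⟨y, hy, z, hz, rfl⟩ := Submodule.mem_sup.1 ha
  rw [hconnA, Submodule.mem_span_singleton] at hy
  obtain ⟨c, rfl⟩ := hy
  refine ⟨c, ?_⟩
  rw [Algebra.algebraMap_eq_smul_one, add_sub_cancel_left]
  exact hz

/-- Nakayama: lifts to `C` of a `k`-spanning family of the fiber `B` generate `C` over `A`. -/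
theorem span_lift_eq_top {k A B C : Type*} [Field k] [CommRing A] [Algebra k A] [CommRing B]
    [Algebra k B] [CommRing C] [Algebra k C] [Algebra A C] [IsScalarTower k A C]
    [Module.Finite A C] (π : C →ₐ[k] B) (s : Set A) (hs : s ⊆ nilradical A)
    (hker : RingHom.ker (π : C →+* B) = Ideal.span (algebraMap A C '' s))
    {κ : Type*} (v : κ → C) (hv : Submodule.span k (Set.range (π ∘ v)) = ⊤) :
    Submodule.span A (Set.range v) = ⊤ := by
  refine top_le_iff.1 (Submodule.le_of_le_smul_of_le_jacobson_bot (I := Ideal.span s)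
    Module.Finite.fg_top ((Ideal.span_le.2 hs).trans (Ideal.radical_le_jacobson (I := ⊥))) ?_)
  intro c _
  have hc : π c ∈ (Submodule.span k (Set.range v)).map π.toLinearMap := by
    rw [Submodule.map_span, ← Set.range_comp]
    have : π c ∈ Submodule.span k (Set.range (π ∘ v)) := hv ▸ Submodule.mem_top
    exact this
  obtain ⟨d, hd, hdc⟩ := hc
  refine Submodule.mem_sup.2 ⟨d, Submodule.span_le_restrictScalars k A _ hd, c - d, ?_, by ring⟩
  rw [Ideal.smul_top_eq_map, Ideal.map_span, Submodule.restrictScalars_mem, ← hker,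
    RingHom.mem_ker]
  have hdc' : π d = π c := hdc
  simp [hdc']

theorem span_image_eq_top {k A B C : Type*} [Field k] [CommRing A] [Algebra k A] [CommRing B]
    [Algebra k B] [CommRing C] [Algebra k C] [Algebra A C] [IsScalarTower k A C]
    (π : C →ₐ[k] B) (hsurj : Function.Surjective π) (s : Set A)
    (hs : ∀ a : A, ∃ c : k, a - algebraMap k A c ∈ s)
    (hπs : ∀ a ∈ s, π (algebraMap A C a) = 0)
    {κ : Type*} (e : κ → C) (he : Submodule.span A (Set.range e) = ⊤) :
    Submodule.span k (Set.range (π ∘ e)) = ⊤ := by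
  refine top_le_iff.1 fun b _ => ?_
  obtain ⟨c, rfl⟩ := hsurj b
  have hc : c ∈ Submodule.span A (Set.range e) := he ▸ Submodule.mem_top
  induction hc using Submodule.span_induction with
  | mem x hx =>
    obtain ⟨i, rfl⟩ := hx
    exact Submodule.subset_span ⟨i, rfl⟩
  | zero => simp
  | add x y _ _ hx hy =>
    rw [map_add]
    exact add_mem (hx trivial) (hy trivial)
  | smul a x _ hx =>
    obtain ⟨t, ht⟩ := hs a
    have h0 := hπs _ ht
    rw [map_sub, map_sub, sub_eq_zero, ← IsScalarTower.algebraMap_apply, AlgHom.commutes] at h0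
    rw [Algebra.smul_def, map_mul, h0, ← Algebra.smul_def]
    exact Submodule.smul_mem _ _ (hx trivial)

/-- Let `A`, `B`, `C` be graded Artinian algebras over a field `k` with
degree-preserving algebra maps `ι : A → C` and `π : C → B`, where `π` is
surjective and `ker(π) = ι(m_A)·C`.  Then `C` is a free `A`-module via `ι` if
and only if `dim_k C = dim_k A · dim_k B`; in this case `C` is a free extension
with base `A` and fiber `B`. -/
theorem free_iff_dim_mul
    {k A B C : Type} [Field k] [CommRing A] [Algebra k A] [CommRing B] [Algebra k B]
    [CommRing C] [Algebra k C]
    (𝒜 : ℕ → Submodule k A) [GradedAlgebra 𝒜] [FiniteDimensional k A]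
    (hconnA : 𝒜 0 = Submodule.span k {(1 : A)})
    (ℬ : ℕ → Submodule k B) [GradedAlgebra ℬ] [FiniteDimensional k B]
    (hconnB : ℬ 0 = Submodule.span k {(1 : B)})
    (𝒞 : ℕ → Submodule k C) [GradedAlgebra 𝒞] [FiniteDimensional k C]
    (hconnC : 𝒞 0 = Submodule.span k {(1 : C)})
    (ι : A →ₐ[k] C) (π : C →ₐ[k] B)
    (hιdeg : ∀ i : ℕ, ∀ x ∈ 𝒜 i, ι x ∈ 𝒞 i)
    (hπdeg : ∀ i : ℕ, ∀ x ∈ 𝒞 i, π x ∈ ℬ i)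
    (hsurj : Function.Surjective π)
    (hker : RingHom.ker (π : C →+* B) = Ideal.span (⇑ι '' gradedMaxSet 𝒜))
    [Algebra A C] (hAC : algebraMap A C = (ι : A →+* C)) :
    (Module.Free A C ↔
      Module.finrank k C = Module.finrank k A * Module.finrank k B) ∧
    (Module.finrank k C = Module.finrank k A * Module.finrank k B →
      -- `C` is a free extension with base `A` and fiber `B`:
      Module.Free A C ∧ Function.Surjective π ∧
        RingHom.ker (π : C →+* B) = Ideal.span (⇑ι '' gradedMaxSet 𝒜)) := by
  have hmap : ∀ a, algebraMap A C a = ι a := fun a => by rw [hAC]; rfl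
  have : IsScalarTower k A C := IsScalarTower.of_algebraMap_eq fun x => by
    rw [hmap, AlgHom.commutes]
  have : Module.Finite A C := Module.Finite.of_restrictScalars_finite k A C
  have hker' : RingHom.ker (π : C →+* B) = Ideal.span (algebraMap A C '' gradedMaxSet 𝒜) := by
    rw [hker, hAC]; rfl
  let b := Module.finBasis k B
  choose v hv using fun i => hsurj (b i)
  have hvb : π ∘ v = b := funext hv
  have hspan : Submodule.span A (Set.range v) = ⊤ :=
    span_lift_eq_top π _ (gradedMaxSet_subset_nilradical 𝒜) hker' v (by rw [hvb, b.span_eq])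
  have hfree : Module.finrank k C = Module.finrank k A * Module.finrank k B →
      Module.Free A C := by
    intro hdim
    let φ : (Fin (Module.finrank k B) → A) →ₗ[A] C := Fintype.linearCombination A v
    have hφ : Function.Surjective φ := by
      rw [← LinearMap.range_eq_top, Fintype.range_linearCombination, hspan]
    have hφi : Function.Injective φ := by
      have hd : Module.finrank k (Fin (Module.finrank k B) → A) = Module.finrank k C := by
        rw [Module.finrank_pi_fintype, hdim]
        simp [mul_comm]
      exact (LinearMap.injective_iff_surjective_of_finrank_eq_finrank
        (f := φ.restrictScalars k) hd).2 hφ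
    exact Module.Free.of_equiv (LinearEquiv.ofBijective φ ⟨hφi, hφ⟩)
  refine ⟨⟨fun hF => ?_, hfree⟩, fun h => ⟨hfree h, hsurj, hker⟩⟩
  rcases subsingleton_or_nontrivial A with hA | hA
  -- The zero ring is allowed as `A`; then `C` is zero as well.
  · have : Subsingleton C := Module.subsingleton A C
    simp [Module.finrank_zero_of_subsingleton]
  · have hle : Module.finrank A C ≤ Module.finrank k B := by
      have := finrank_range_le_card (R := A) v
      rwa [Set.finrank, hspan, finrank_top, Fintype.card_fin] at this
    have hge : Module.finrank k B ≤ Module.finrank A C := by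
      let e := Module.finBasis A C
      have hs := span_image_eq_top π hsurj (gradedMaxSet 𝒜)
        (exists_sub_algebraMap_mem 𝒜 hconnA)
        (fun a ha => by
          have : algebraMap A C a ∈ RingHom.ker (π : C →+* B) := by
            rw [hker']
            exact Ideal.subset_span ⟨a, ha, rfl⟩
          exact this) e e.span_eq
      have := finrank_range_le_card (R := k) (π ∘ e)
      rwa [Set.finrank, hs, finrank_top, Fintype.card_fin] at this
    rw [← Module.finrank_mul_finrank k A C, le_antisymm hle hge]
end

section
/- Let V be a finite-dimensional vector space over a field k and let K ⊂ W ⊂ GL(V) be finite non-modular reflection groups (so |W| is invertible in k and both K and W are generated by reflections). If K is not a parabolic subgroup of W, then the relative coinvariant ring R^K_W has no strong Lefschetz element; i.e., R^K_W is not strong Lefschetz. -/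
/-!
Let `Q` be the pointwise stabilizer in `W` of `V^K`. As `K` is not parabolic, `K` is strictly
contained in `Q`. The averaging projections of `K` and `Q` onto `V^K = V^Q` coincide, so every
`K`-invariant linear form is `Q`-invariant (`linear_mem_invAlg`). If a linear form `ℓ` were strong
Lefschetz and `d` the top degree of `R^K_W`, then `ℓ^d ∉ h_W`, while `ℓ^d` is killed in `R^K_W` by
all `K`-invariants of positive degree.

The main tool is the family of divided differences `f ↦ (f - s·f) / a`, for `s` a reflection with
root `a`; they are linear over the `s`-invariants and preserve the Hilbert ideals. A degree induction
combined with averaging (`le_of_dividedStable`) shows that a proper ideal which contains the Hilbert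
ideal `h_G` of a reflection group `G` and is stable under the divided differences of `G` equals
`h_G`; the same holds for the ideal generated by `F - F(v)`, `F ∈ R^G`, for any `v ∈ V`.

If `Q` is generated by reflections, this applies to the ideal `(h_W : ℓ^d)`: it contains `h_K`, hence
`h_Q`, and it is stable under the divided differences of `Q` because `ℓ` is `Q`-invariant. So
`h_K ⊆ (h_W : ℓ^d) ⊆ h_Q`, which forces `R^K = R^Q` and then `Q = K` (`le_of_hilbertIdeal_le`), a
contradiction.

That `Q` is generated by reflections is Steinberg's theorem. It is proved for the stabilizer `W_v` of
one vector (`rootGenerated_vecStab`) by the same principle, applied to the ideal of polynomials whose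
germs along the orbit of `v` lie in the translated Hilbert ideals of the reflection subgroups of the
point stabilizers; subspaces follow by iteration.
-/

open MvPolynomial

set_option synthInstance.maxHeartbeats 1000000
set_option maxHeartbeats 2000000

section InvariantTheory

variable {k : Type} [Field k] {n : ℕ}

/-- The action of `w ∈ GL(V)` (for `V = k^n`) on the polynomial ring
`R = Sym(V^*) = k[x_1, …, x_n]`, given by `(w·f)(v) = f(w⁻¹ v)`. -/
noncomputable def polyAct (w : GL (Fin n) k) :
    MvPolynomial (Fin n) k →ₐ[k] MvPolynomial (Fin n) k :=
  aeval (fun i => ∑ j, ((w⁻¹ : GL (Fin n) k) : Matrix (Fin n) (Fin n) k) i j • X j)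

/-- The subalgebra `R^W ⊆ R` of polynomials invariant under a subgroup
`W ⊆ GL(V)`. -/
noncomputable def invAlg (W : Subgroup (GL (Fin n) k)) :
    Subalgebra k (MvPolynomial (Fin n) k) where
  carrier := {f | ∀ w ∈ W, polyAct w f = f}
  mul_mem' := fun hf hg => fun w hw => by
    rw [map_mul, hf w hw, hg w hw]
  add_mem' := fun hf hg => fun w hw => by
    rw [map_add, hf w hw, hg w hw]
  algebraMap_mem' := fun c => fun w hw => (polyAct w).commutes c

/-- The Hilbert ideal `h_W ⊆ R`: the ideal generated by the `W`-invariant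
polynomials of strictly positive degree (zero constant term). -/
noncomputable def hilbertIdeal (W : Subgroup (GL (Fin n) k)) :
    Ideal (MvPolynomial (Fin n) k) :=
  Ideal.span {f | f ∈ invAlg W ∧ constantCoeff f = 0}

/-- The coinvariant ring `R_W = R/h_W`. -/
noncomputable abbrev CoinvRing (W : Subgroup (GL (Fin n) k)) :=
  MvPolynomial (Fin n) k ⧸ hilbertIdeal W

/-- The ideal `h_W ∩ R^K` of the invariant ring `R^K`. -/
noncomputable def relIdeal (K W : Subgroup (GL (Fin n) k)) : Ideal (invAlg K) :=
  Ideal.comap ((invAlg K).val : invAlg K →ₐ[k] MvPolynomial (Fin n) k).toRingHom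
    (hilbertIdeal W)

/-- The relative coinvariant ring `R^K_W = R^K/(h_W ∩ R^K)`. -/
noncomputable abbrev RelCoinvRing (K W : Subgroup (GL (Fin n) k)) :=
  (invAlg K) ⧸ relIdeal K W

/-- The natural map `ι : R^K_W → R_W` induced by the inclusion `R^K ⊆ R`. -/
noncomputable def relToCoinv (K W : Subgroup (GL (Fin n) k)) :
    RelCoinvRing K W →ₐ[k] CoinvRing W :=
  Ideal.Quotient.liftₐ (relIdeal K W)
    ((Ideal.Quotient.mkₐ k (hilbertIdeal W)).comp (invAlg K).val)
    (fun a ha => by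
      rw [AlgHom.comp_apply, Ideal.Quotient.mkₐ_eq_mk]
      exact Ideal.Quotient.eq_zero_iff_mem.mpr (Ideal.mem_comap.mp ha))

/-- The natural projection `π : R_W → R_K` for `K ≤ W`. -/
noncomputable def coinvProj (K W : Subgroup (GL (Fin n) k)) (hKW : K ≤ W) :
    CoinvRing W →ₐ[k] CoinvRing K :=
  Ideal.Quotient.liftₐ (hilbertIdeal W) (Ideal.Quotient.mkₐ k (hilbertIdeal K))
    (fun a ha => by
      rw [Ideal.Quotient.mkₐ_eq_mk]
      refine Ideal.Quotient.eq_zero_iff_mem.mpr ?_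
      refine Ideal.span_mono ?_ ha
      rintro f ⟨hf, hf0⟩
      exact ⟨fun w hw => hf w (hKW hw), hf0⟩)

/-- A subalgebra `S ⊆ R` is a polynomial ring: it is generated by algebraically
independent homogeneous elements. -/
def IsPolynomialSubalgebra (S : Subalgebra k (MvPolynomial (Fin n) k)) : Prop :=
  ∃ (m : ℕ) (f : Fin m → MvPolynomial (Fin n) k),
    AlgebraicIndependent k f ∧ (∀ i, ∃ d : ℕ, (f i).IsHomogeneous d) ∧
      Algebra.adjoin k (Set.range f) = S

/-- The maximal graded ideal of the relative coinvariant ring `R^K_W`, as a set: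
the image of the `K`-invariants with zero constant term. -/
noncomputable def relMaxSet (K W : Subgroup (GL (Fin n) k)) : Set (RelCoinvRing K W) :=
  (Ideal.Quotient.mk (relIdeal K W)) ''
    {f : invAlg K | constantCoeff (f : MvPolynomial (Fin n) k) = 0}

end InvariantTheory

/-- `g ∈ GL(V)` is a reflection: it has finite order and its fixed-point
subspace is a hyperplane of `V = k^n`. -/
def IsReflection {k : Type} [Field k] {n : ℕ} (g : GL (Fin n) k) : Prop :=
  IsOfFinOrder g ∧
    Module.finrank k (LinearMap.ker
      (Matrix.mulVecLin (g : Matrix (Fin n) (Fin n) k) - LinearMap.id)) = n - 1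

/-- A subgroup `W ⊆ GL(V)` is a reflection group if it is generated by its
reflections. -/
def IsReflectionGroup {k : Type} [Field k] {n : ℕ} (W : Subgroup (GL (Fin n) k)) : Prop :=
  Subgroup.closure {g | g ∈ W ∧ IsReflection g} = W

/-- `K` is a parabolic subgroup of `W` if it is the pointwise stabilizer in `W`
of some subspace `H ⊆ V`. -/
def IsParabolic {k : Type} [Field k] {n : ℕ} (K W : Subgroup (GL (Fin n) k)) : Prop :=
  ∃ H : Submodule k (Fin n → k), (K : Set (GL (Fin n) k)) =
    {w | w ∈ W ∧ ∀ v ∈ H, Matrix.mulVec (w : Matrix (Fin n) (Fin n) k) v = v}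

/-- The grading on the relative coinvariant ring `R^K_W`: the degree-`d` piece
is spanned by the images of the homogeneous degree-`d` `K`-invariants. -/
noncomputable def relGrading {k : Type} [Field k] {n : ℕ}
    (K W : Subgroup (GL (Fin n) k)) (d : ℕ) : Submodule k (RelCoinvRing K W) :=
  Submodule.span k ((Ideal.Quotient.mk (relIdeal K W)) ''
    {f : invAlg K | ((f : MvPolynomial (Fin n) k)).IsHomogeneous d})

section Helpers

variable {k : Type} [Field k] {n : ℕ}

/-! ### The action on polynomials -/

lemma polyAct_X (w : GL (Fin n) k) (i : Fin n) :
    polyAct w (X i) =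
      ∑ j, ((w⁻¹ : GL (Fin n) k) : Matrix (Fin n) (Fin n) k) i j • (X j : MvPolynomial (Fin n) k) := by
  simp [polyAct]

lemma polyAct_one (f : MvPolynomial (Fin n) k) : polyAct 1 f = f := by
  have h : polyAct (1 : GL (Fin n) k) = AlgHom.id k _ := by
    ext i : 1
    rw [polyAct_X]
    simp [Matrix.one_apply]
  rw [h]; rfl

lemma polyAct_mul (g h : GL (Fin n) k) (f : MvPolynomial (Fin n) k) :
    polyAct (g * h) f = polyAct g (polyAct h f) := by
  have key : polyAct (g * h) = (polyAct g).comp (polyAct h) := by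
    ext i : 1
    rw [AlgHom.comp_apply, polyAct_X, polyAct_X, map_sum]
    simp only [map_smul, polyAct_X, mul_inv_rev, Units.val_mul, Matrix.mul_apply, Finset.smul_sum,
      Finset.sum_smul, smul_smul]
    exact Finset.sum_comm
  rw [key]; rfl

lemma polyAct_inv_self (g : GL (Fin n) k) (f : MvPolynomial (Fin n) k) :
    polyAct g⁻¹ (polyAct g f) = f := by
  rw [← polyAct_mul, inv_mul_cancel, polyAct_one]

lemma polyAct_self_inv (g : GL (Fin n) k) (f : MvPolynomial (Fin n) k) :
    polyAct g (polyAct g⁻¹ f) = f := by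
  rw [← polyAct_mul, mul_inv_cancel, polyAct_one]

lemma polyAct_ext {g h : GL (Fin n) k}
    (H : ∀ i, polyAct g (X i) = polyAct h (X i)) : g = h := by
  rw [← inv_inj]
  ext i j
  have h1 := congrArg (coeff (Finsupp.single j 1)) (H i)
  rw [polyAct_X, polyAct_X] at h1
  simpa [coeff_sum, coeff_X, Finsupp.single_left_inj] using h1

lemma polyAct_isHomogeneous (w : GL (Fin n) k) {f : MvPolynomial (Fin n) k} {d : ℕ}
    (hf : f.IsHomogeneous d) : (polyAct w f).IsHomogeneous d := by
  have h := hf.aeval (S := k) (n := 1)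
    (fun i => ∑ j, ((w⁻¹ : GL (Fin n) k) : Matrix (Fin n) (Fin n) k) i j •
      (X j : MvPolynomial (Fin n) k)) (fun i => by
        apply IsHomogeneous.sum
        intro j _
        rw [smul_eq_C_mul]
        exact (isHomogeneous_X k j).C_mul _)
  rwa [one_mul] at h

lemma totalDegree_polyAct_le (w : GL (Fin n) k) (f : MvPolynomial (Fin n) k) :
    (polyAct w f).totalDegree ≤ f.totalDegree := by
  conv_lhs => rw [← sum_homogeneousComponent f, map_sum]
  refine totalDegree_finsetSum_le fun i hi => ?_
  refine (polyAct_isHomogeneous w (homogeneousComponent_isHomogeneous i f)).totalDegree_le.trans ?_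
  have := Finset.mem_range.mp hi
  omega

lemma eval_polyAct (w : GL (Fin n) k) (v : Fin n → k) (f : MvPolynomial (Fin n) k) :
    eval v (polyAct w f) =
      eval (((w⁻¹ : GL (Fin n) k) : Matrix (Fin n) (Fin n) k).mulVec v) f := by
  have key : (aeval v : MvPolynomial (Fin n) k →ₐ[k] k).comp (polyAct w) =
      aeval (((w⁻¹ : GL (Fin n) k) : Matrix (Fin n) (Fin n) k).mulVec v) := by
    ext i
    rw [AlgHom.comp_apply, polyAct_X]
    simp [Matrix.mulVec, dotProduct]
  have := congrArg (fun φ => φ f) key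
  simpa [aeval_eq_eval] using this

lemma constantCoeff_polyAct (w : GL (Fin n) k) (f : MvPolynomial (Fin n) k) :
    constantCoeff (polyAct w f) = constantCoeff f := by
  have := eval_polyAct w 0 f
  rw [Matrix.mulVec_zero] at this
  simpa [← constantCoeff_eq, eval_zero'] using this

lemma mem_invAlg {W : Subgroup (GL (Fin n) k)} {f : MvPolynomial (Fin n) k} :
    f ∈ invAlg W ↔ ∀ w ∈ W, polyAct w f = f := Iff.rfl

lemma sum_polyAct_mem (G : Subgroup (GL (Fin n) k)) [Fintype G] (f : MvPolynomial (Fin n) k) :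
    ∑ g : G, polyAct g.1 f ∈ invAlg G := by
  intro w hw
  rw [map_sum]
  simp only [← polyAct_mul]
  exact Fintype.sum_equiv (Equiv.mulLeft (⟨w, hw⟩ : G)) _ _ (fun g => rfl)

lemma constantCoeff_eq_zero_of_mem (W : Subgroup (GL (Fin n) k)) {f : MvPolynomial (Fin n) k}
    (hf : f ∈ hilbertIdeal W) : constantCoeff f = 0 := by
  have : hilbertIdeal W ≤ RingHom.ker (constantCoeff : MvPolynomial (Fin n) k →+* k) := by
    refine Ideal.span_le.mpr ?_
    rintro f ⟨-, h⟩
    exact h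
  exact this hf

lemma one_notMem_hilbertIdeal (W : Subgroup (GL (Fin n) k)) :
    (1 : MvPolynomial (Fin n) k) ∉ hilbertIdeal W := by
  intro h
  simpa using constantCoeff_eq_zero_of_mem W h

/-- The Hilbert ideal of `P` is stable under every element normalizing `P`. -/
lemma polyAct_mem_hilbertIdeal {P : Subgroup (GL (Fin n) k)} {g : GL (Fin n) k}
    (hg : ∀ p ∈ P, g⁻¹ * p * g ∈ P) {f : MvPolynomial (Fin n) k} (hf : f ∈ hilbertIdeal P) :
    polyAct g f ∈ hilbertIdeal P := by
  have : hilbertIdeal P ≤ (hilbertIdeal P).comap (polyAct g) := by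
    refine Ideal.span_le.mpr ?_
    rintro f ⟨h1, h2⟩
    refine Ideal.subset_span ⟨fun p hp => ?_, by rw [constantCoeff_polyAct, h2]⟩
    have := h1 _ (hg p hp)
    rw [polyAct_mul, polyAct_mul] at this
    have h3 := congrArg (polyAct g) this
    rwa [polyAct_self_inv] at h3
  exact this hf

lemma polyAct_mem_hilbertIdeal_self {P : Subgroup (GL (Fin n) k)} {g : GL (Fin n) k}
    (hg : g ∈ P) {f : MvPolynomial (Fin n) k} (hf : f ∈ hilbertIdeal P) :
    polyAct g f ∈ hilbertIdeal P :=
  polyAct_mem_hilbertIdeal (fun _ hp => P.mul_mem (P.mul_mem (P.inv_mem hg) hp) hg) hf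

lemma hilbertIdeal_anti {K W : Subgroup (GL (Fin n) k)} (h : K ≤ W) :
    hilbertIdeal W ≤ hilbertIdeal K :=
  Ideal.span_mono fun _ hf => ⟨fun w hw => hf.1 w (h hw), hf.2⟩

/-! ### Reflections and divided differences -/

/-- `s` has root `a`: a nonzero linear form dividing `f - s·f` for every polynomial `f`. For
`s ≠ 1` this says that `s` is a reflection and `a = 0` is an equation of its hyperplane. -/
def HasRoot (a : MvPolynomial (Fin n) k) (s : GL (Fin n) k) : Prop :=
  a ≠ 0 ∧ a.IsHomogeneous 1 ∧ ∀ f, a ∣ f - polyAct s f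

/-- `G` is generated by elements having a root. -/
def RootGenerated (G : Subgroup (GL (Fin n) k)) : Prop :=
  Subgroup.closure {s | s ∈ G ∧ ∃ a, HasRoot a s} = G

/-- `I` is stable under the divided difference operators `f ↦ (f - s·f) / a` of all the elements
`s ∈ G` having a root `a`. -/
def DividedStable (G : Subgroup (GL (Fin n) k)) (I : Ideal (MvPolynomial (Fin n) k)) : Prop :=
  ∀ s ∈ G, ∀ a, HasRoot a s → ∀ f ∈ I, ∀ q, f - polyAct s f = a * q → q ∈ I

lemma HasRoot.conj {a : MvPolynomial (Fin n) k} {s : GL (Fin n) k} (h : HasRoot a s)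
    (w : GL (Fin n) k) : HasRoot (polyAct w a) (w * s * w⁻¹) := by
  refine ⟨fun h0 => h.1 ?_, polyAct_isHomogeneous w h.2.1, fun f => ?_⟩
  · rw [← polyAct_inv_self w a, h0, map_zero]
  · have := map_dvd (polyAct w) (h.2.2 (polyAct w⁻¹ f))
    rwa [map_sub, polyAct_self_inv, ← polyAct_mul, ← polyAct_mul] at this

lemma hasRoot_of_X {a : MvPolynomial (Fin n) k} {s : GL (Fin n) k} (ha : a ≠ 0)
    (ha1 : a.IsHomogeneous 1) (h : ∀ i, a ∣ X i - polyAct s (X i)) : HasRoot a s := by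
  refine ⟨ha, ha1, fun f => ?_⟩
  have key : Ideal.Quotient.mkₐ k (Ideal.span {a}) =
      (Ideal.Quotient.mkₐ k (Ideal.span {a})).comp (polyAct s) := by
    ext i : 1
    rw [AlgHom.comp_apply, Ideal.Quotient.mkₐ_eq_mk, Ideal.Quotient.eq,
      Ideal.mem_span_singleton]
    exact h i
  rw [← Ideal.mem_span_singleton, ← Ideal.Quotient.eq]
  exact congrArg (fun φ => φ f) key

lemma IsReflection.exists_root {s : GL (Fin n) k} (h : IsReflection s) :
    s = 1 ∨ ∃ a, HasRoot a s := by
  obtain ⟨-, hk⟩ := h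
  set L := Matrix.mulVecLin (s : Matrix (Fin n) (Fin n) k) - LinearMap.id with hL
  have h1 : Module.finrank k (LinearMap.range L) ≤ 1 := by
    have := LinearMap.finrank_range_add_finrank_ker L
    rw [hk, Module.finrank_fin_fun] at this
    omega
  obtain ⟨c, hc⟩ := finrank_le_one_iff.mp h1
  have h2 : ∀ j, ∃ t : k, ∀ i, t * c.1 i = (s : Matrix (Fin n) (Fin n) k) i j -
      (1 : Matrix (Fin n) (Fin n) k) i j := by
    intro j
    obtain ⟨t, ht⟩ := hc ⟨L (Pi.single j 1), LinearMap.mem_range_self _ _⟩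
    refine ⟨t, fun i => ?_⟩
    have := congrFun (congrArg Subtype.val ht) i
    simpa [hL, Matrix.one_apply, Pi.single_apply] using this
  choose t ht using h2
  set a : MvPolynomial (Fin n) k := ∑ j, t j • X j with ha
  have hX : ∀ i, polyAct s⁻¹ (X i) - X i = C (c.1 i) * a := by
    intro i
    have hi : (X i : MvPolynomial (Fin n) k) =
        ∑ j, (1 : Matrix (Fin n) (Fin n) k) i j • X j := by
      simp [Matrix.one_apply]
    rw [polyAct_X, inv_inv]
    conv_lhs => rw [hi]
    rw [← Finset.sum_sub_distrib, ha, ← smul_eq_C_mul, Finset.smul_sum]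
    refine Finset.sum_congr rfl fun j _ => ?_
    rw [← sub_smul, ← ht, smul_smul, mul_comm]
  by_cases h0 : a = 0
  · left
    rw [← inv_eq_one]
    refine polyAct_ext fun i => ?_
    have := hX i
    rw [h0, mul_zero, sub_eq_zero] at this
    rw [this, polyAct_one]
  · right
    have hr : HasRoot a s⁻¹ := by
      refine hasRoot_of_X h0 ?_ fun i => ?_
      · apply IsHomogeneous.sum
        intro j _
        rw [smul_eq_C_mul]
        exact (isHomogeneous_X k j).C_mul _
      · rw [← neg_sub, hX]
        exact (Dvd.intro_left _ rfl).neg_right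
    refine ⟨polyAct s a, fun h1 => h0 ?_, polyAct_isHomogeneous s hr.2.1, fun f => ?_⟩
    · rw [← polyAct_inv_self s a, h1, map_zero]
    · have := map_dvd (polyAct s) (hr.2.2 f)
      rw [map_sub, polyAct_self_inv] at this
      rw [← neg_sub]
      exact this.neg_right

lemma IsReflectionGroup.rootGenerated {G : Subgroup (GL (Fin n) k)} (h : IsReflectionGroup G) :
    RootGenerated G := by
  refine le_antisymm ((Subgroup.closure_le _).mpr fun s hs => hs.1) ?_
  rw [IsReflectionGroup] at h
  conv_lhs => rw [← h]
  refine (Subgroup.closure_le _).mpr fun s hs => ?_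
  rcases hs.2.exists_root with rfl | hr
  · exact Subgroup.one_mem _
  · exact Subgroup.subset_closure ⟨hs.1, hr⟩

lemma dividedStable_hilbertIdeal (G : Subgroup (GL (Fin n) k)) :
    DividedStable G (hilbertIdeal G) := by
  intro s hs a ha f hf q hq
  have key : ∀ f ∈ hilbertIdeal G, ∃ r ∈ hilbertIdeal G, f - polyAct s f = a * r := by
    intro f hf
    refine Submodule.span_induction (p := fun f _ => ∃ r ∈ hilbertIdeal G,
      f - polyAct s f = a * r) ?_ ?_ ?_ ?_ hf
    · rintro F ⟨h1, -⟩
      exact ⟨0, zero_mem _, by rw [h1 s hs, sub_self, mul_zero]⟩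
    · exact ⟨0, zero_mem _, by simp⟩
    · rintro x y _ _ ⟨r, hr, h1⟩ ⟨r', hr', h2⟩
      exact ⟨r + r', add_mem hr hr', by rw [map_add, mul_add, ← h1, ← h2]; ring⟩
    · rintro p x hx ⟨r, hr, h1⟩
      obtain ⟨u, hu⟩ := ha.2.2 p
      -- the twisted Leibniz rule `px - s(px) = (p - s p) x + (s p) (x - s x)`
      refine ⟨u * x + polyAct s p * r,
        add_mem (Ideal.mul_mem_left _ _ hx) (Ideal.mul_mem_left _ _ hr), ?_⟩
      rw [smul_eq_mul, map_mul]
      linear_combination x * hu + polyAct s p * h1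
  obtain ⟨r, hr, h1⟩ := key f hf
  rw [h1] at hq
  rwa [← mul_left_cancel₀ ha.1 hq]

/-- A divided-difference-stable proper ideal `I` cannot be strictly larger than a `G`-stable ideal
`J` modulo which all invariants are constants: divided differences lower the degree, so by
induction on the degree `f ∈ I` is congruent to all its translates modulo `J`, hence to its average
over `G`, hence to a constant, which must vanish as `I` is proper. -/
lemma le_of_dividedStable {G : Subgroup (GL (Fin n) k)} [Finite G] (hmod : (Nat.card G : k) ≠ 0)
    (hG : RootGenerated G) {I J : Ideal (MvPolynomial (Fin n) k)} (hJI : J ≤ I) (hI : 1 ∉ I)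
    (hJ : ∀ g ∈ G, ∀ f ∈ J, polyAct g f ∈ J)
    (hJc : ∀ F ∈ invAlg G, ∃ c : k, F - C c ∈ J) (hst : DividedStable G I) : I ≤ J := by
  have hconst : ∀ c : k, C c ∈ I → c = 0 := by
    intro c hc
    by_contra h0
    apply hI
    have := I.mul_mem_left (C c⁻¹) hc
    rwa [← C_mul, inv_mul_cancel₀ h0, C_1] at this
  have key : ∀ m : ℕ, ∀ f ∈ I, f.totalDegree ≤ m → f ∈ J := by
    intro m
    induction m with
    | zero =>
      intro f hf hd
      have h := totalDegree_eq_zero_iff_eq_C.mp (Nat.le_zero.mp hd)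
      rw [h] at hf ⊢
      rw [hconst _ hf, C_0]
      exact zero_mem _
    | succ m ih =>
      intro f hf hd
      have h1 : ∀ s ∈ {s | s ∈ G ∧ ∃ a, HasRoot a s}, f - polyAct s f ∈ J := by
        rintro s ⟨hs, a, ha⟩
        obtain ⟨q, hq⟩ := ha.2.2 f
        rw [hq]
        refine J.mul_mem_left _ (ih q (hst s hs a ha f hf q hq) ?_)
        by_cases hq0 : q = 0
        · simp [hq0]
        have h2 := totalDegree_mul_of_isDomain ha.1 hq0
        rw [ha.2.1.totalDegree ha.1, ← hq] at h2
        have h3 := totalDegree_sub f (polyAct s f)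
        have h4 := totalDegree_polyAct_le s f
        rw [max_eq_left h4] at h3
        omega
      have h2 : ∀ g ∈ G, f - polyAct g f ∈ J := by
        intro g hg
        have hg' := hg
        rw [← hG] at hg'
        refine (Subgroup.closure_induction (p := fun g _ => g ∈ G ∧ f - polyAct g f ∈ J)
          ?_ ?_ ?_ ?_ hg').2
        · exact fun s hs => ⟨hs.1, h1 s hs⟩
        · exact ⟨G.one_mem, by simp [polyAct_one]⟩
        · rintro x y _ _ ⟨hx, hx'⟩ ⟨hy, hy'⟩
          refine ⟨G.mul_mem hx hy, ?_⟩
          have := add_mem hx' (hJ x hx _ hy')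
          rwa [map_sub, ← polyAct_mul, sub_add_sub_cancel] at this
        · rintro x _ ⟨hx, hx'⟩
          refine ⟨G.inv_mem hx, ?_⟩
          have := neg_mem (hJ _ (G.inv_mem hx) _ hx')
          rwa [map_sub, polyAct_inv_self, neg_sub] at this
      have := Fintype.ofFinite G
      obtain ⟨c, hc⟩ := hJc _ (sum_polyAct_mem G f)
      have h3 : ∑ g : G, (f - polyAct g.1 f) ∈ J := sum_mem fun g _ => h2 g g.2
      rw [Finset.sum_sub_distrib, Finset.sum_const, Finset.card_univ, nsmul_eq_mul] at h3
      have h4 := add_mem h3 hc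
      rw [sub_add_sub_cancel] at h4
      have h5 : C c ∈ I := by
        have := sub_mem (I.mul_mem_left (Fintype.card G : MvPolynomial (Fin n) k) hf) (hJI h4)
        rwa [sub_sub_cancel] at this
      rw [hconst c h5, C_0, sub_zero] at h4
      have h6 := J.mul_mem_left (C (Nat.card G : k)⁻¹) h4
      rwa [← mul_assoc, ← Nat.card_eq_fintype_card, ← map_natCast C, ← C_mul,
        inv_mul_cancel₀ hmod, C_1, one_mul] at h6
  exact fun f hf => key _ f hf le_rfl

/-! ### Nilpotents and units modulo a Hilbert ideal -/

/-- `f` is a root of the monic polynomial `∏ (T - g·f)`, whose lower coefficients are invariants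
without constant term. -/
lemma pow_card_mem_hilbertIdeal (G : Subgroup (GL (Fin n) k)) [Finite G]
    {f : MvPolynomial (Fin n) k} (hf : constantCoeff f = 0) : f ^ Nat.card G ∈ hilbertIdeal G := by
  have := Fintype.ofFinite G
  set Q : Polynomial (MvPolynomial (Fin n) k) :=
    ∏ g : G, (Polynomial.X - Polynomial.C (polyAct g.1 f)) with hQ
  have hinv : ∀ w ∈ G, Q.map (polyAct w : MvPolynomial (Fin n) k →+* _) = Q := by
    intro w hw
    rw [hQ, Polynomial.map_prod]
    simp only [Polynomial.map_sub, Polynomial.map_X, Polynomial.map_C, RingHom.coe_coe, ← polyAct_mul]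
    exact Fintype.prod_equiv (Equiv.mulLeft (⟨w, hw⟩ : G)) _ _ (fun g => rfl)
  have hc : Q.map (constantCoeff : MvPolynomial (Fin n) k →+* k) =
      Polynomial.X ^ Nat.card G := by
    rw [hQ, Polynomial.map_prod]
    simp [constantCoeff_polyAct, hf, Nat.card_eq_fintype_card]
  have hroot : Q.eval f = 0 := by
    rw [hQ, Polynomial.eval_prod]
    refine Finset.prod_eq_zero (Finset.mem_univ (1 : G)) ?_
    simp [polyAct_one]
  have hdeg : Q.natDegree = Nat.card G := by
    rw [hQ, Polynomial.natDegree_prod_of_monic _ _ (fun g _ => Polynomial.monic_X_sub_C _)]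
    simp [Nat.card_eq_fintype_card]
  have hmonic : Q.Monic := Polynomial.monic_prod_of_monic _ _
    (fun g _ => Polynomial.monic_X_sub_C _)
  rw [Polynomial.eval_eq_sum_range, Finset.sum_range_succ, hmonic.coeff_natDegree, one_mul,
    hdeg] at hroot
  rw [eq_neg_of_add_eq_zero_right hroot]
  refine neg_mem (sum_mem fun i hi => Ideal.mul_mem_right _ _ (Ideal.subset_span ⟨?_, ?_⟩))
  · intro w hw
    conv_rhs => rw [← hinv w hw]
    rw [Polynomial.coeff_map]; rfl
  · have h1 := congrArg (fun p => Polynomial.coeff p i) hc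
    have hi' := (Finset.mem_range.mp hi).ne
    simpa only [Polynomial.coeff_map, Polynomial.coeff_X_pow, hi', if_false] using h1

lemma mem_hilbertIdeal_of_mul {G : Subgroup (GL (Fin n) k)} [Finite G]
    {b q : MvPolynomial (Fin n) k} (hb : constantCoeff b ≠ 0) (h : b * q ∈ hilbertIdeal G) :
    q ∈ hilbertIdeal G := by
  set π := Ideal.Quotient.mk (hilbertIdeal G)
  have h1 : IsNilpotent (π (b - C (constantCoeff b))) :=
    ⟨Nat.card G, by
      rw [← map_pow, Ideal.Quotient.eq_zero_iff_mem]
      exact pow_card_mem_hilbertIdeal G (by simp)⟩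
  have h2 : IsUnit (π (C (constantCoeff b))) :=
    ((IsUnit.mk0 _ hb).map C).map π
  have h3 := h1.isUnit_add_left_of_commute h2 (Commute.all _ _)
  rw [← map_add, add_sub_cancel] at h3
  rw [← Ideal.Quotient.eq_zero_iff_mem, map_mul] at h
  rw [← Ideal.Quotient.eq_zero_iff_mem]
  exact (h3.mul_right_eq_zero).mp h

lemma exists_homogeneous_mem_hilbertIdeal (G : Subgroup (GL (Fin n) k)) [Finite G] :
    ∃ N : ℕ, ∀ d, N ≤ d → ∀ f : MvPolynomial (Fin n) k, f.IsHomogeneous d →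
      f ∈ hilbertIdeal G := by
  have h1 : idealOfVars (Fin n) k ≤ (hilbertIdeal G).radical := by
    refine Ideal.span_le.mpr ?_
    rintro _ ⟨i, rfl⟩
    exact ⟨Nat.card G, pow_card_mem_hilbertIdeal G (by simp)⟩
  obtain ⟨N, hN⟩ := Ideal.exists_pow_le_of_le_radical_of_fg h1 (idealOfVars_fg _ _)
  refine ⟨N, fun d hd f hf => hN ?_⟩
  rw [mem_pow_idealOfVars_iff]
  intro x hx
  rw [mem_support_iff] at hx
  have := hf hx
  rw [Finsupp.degree_eq_weight_one, Pi.one_def] at *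
  exact hd.trans this.ge

/-! ### Recovering a group from its Hilbert ideal -/

/-- A finite group is determined by its invariants. For the generic linear form `f = ∑ xᵢ Yⁱ`, the
coefficients of `∏ (T - h·f)`, `h ∈ K`, are `K`-invariant; if `g` fixes them then `g·f` is a root,
so `g·f = h·f` for some `h ∈ K`. -/
lemma mem_of_fixes_invAlg {K : Subgroup (GL (Fin n) k)} [Finite K] {g : GL (Fin n) k}
    (hg : ∀ f ∈ invAlg K, polyAct g f = f) : g ∈ K := by
  have := Fintype.ofFinite K
  let φ (w : GL (Fin n) k) : Polynomial (MvPolynomial (Fin n) k) →+*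
      Polynomial (MvPolynomial (Fin n) k) :=
    Polynomial.mapRingHom (polyAct w : MvPolynomial (Fin n) k →+* MvPolynomial (Fin n) k)
  have hφ : ∀ w p i, (φ w p).coeff i = polyAct w (p.coeff i) := fun w p i => by
    simp [φ, Polynomial.coeff_map]
  have hφmul : ∀ w w' p, φ (w * w') p = φ w (φ w' p) := fun w w' p => by
    ext1 i
    rw [hφ, hφ, hφ, polyAct_mul]
  set f : Polynomial (MvPolynomial (Fin n) k) :=
    ∑ i : Fin n, Polynomial.monomial (i : ℕ) (X i) with hf
  have hfc : ∀ i : Fin n, f.coeff i = X i := by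
    intro i
    rw [hf, Polynomial.finsetSum_coeff]
    simp [Polynomial.coeff_monomial, Fin.val_inj]
  set Q : Polynomial (Polynomial (MvPolynomial (Fin n) k)) :=
    ∏ h : K, (Polynomial.X - Polynomial.C (φ h.1 f)) with hQ
  have hinv : ∀ w ∈ K, Q.map (φ w) = Q := by
    intro w hw
    rw [hQ, Polynomial.map_prod]
    simp only [Polynomial.map_sub, Polynomial.map_X, Polynomial.map_C, ← hφmul]
    exact Fintype.prod_equiv (Equiv.mulLeft (⟨w, hw⟩ : K)) _ _ (fun g => rfl)
  have hQg : Q.map (φ g) = Q := by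
    ext1 i
    ext1 j
    rw [Polynomial.coeff_map, hφ]
    refine hg _ fun w hw => ?_
    rw [← hφ, ← Polynomial.coeff_map, hinv w hw]
  have hroot : Q.eval f = 0 := by
    rw [hQ, Polynomial.eval_prod]
    refine Finset.prod_eq_zero (Finset.mem_univ (1 : K)) ?_
    have : φ 1 f = f := by
      ext1 i
      rw [hφ, polyAct_one]
    simp [this]
  have h1 : Q.eval (φ g f) = 0 := by
    rw [← hQg, Polynomial.eval_map, Polynomial.eval₂_hom, hroot, map_zero]
  rw [hQ, Polynomial.eval_prod, Finset.prod_eq_zero_iff] at h1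
  obtain ⟨h, -, hh⟩ := h1
  rw [Polynomial.eval_sub, Polynomial.eval_X, Polynomial.eval_C, sub_eq_zero] at hh
  have : g = h.1 := polyAct_ext fun i => by rw [← hfc i, ← hφ, ← hφ, hh]
  rw [this]
  exact h.2

/-- If `h_K ⊆ h_{K'}` with `K ≤ K'`, then averaging over `K` gives `R^K = R^{K'} + m^N R^K` for all
`N`, so `g·f - f` lies in every power of the irrelevant ideal `m` for `g ∈ K'`, `f ∈ R^K`. -/
lemma le_of_hilbertIdeal_le {K K' : Subgroup (GL (Fin n) k)} [Finite K] (hKK' : K ≤ K')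
    (hmod : (Nat.card K : k) ≠ 0) (h : hilbertIdeal K ≤ hilbertIdeal K') : K' ≤ K := by
  intro g hg
  refine mem_of_fixes_invAlg (fun f hf => ?_)
  have := Fintype.ofFinite K
  set m : Ideal (MvPolynomial (Fin n) k) :=
    RingHom.ker (constantCoeff : MvPolynomial (Fin n) k →+* k) with hm
  have key : ∀ N : ℕ, ∀ f ∈ invAlg K, polyAct g f - f ∈ m ^ N := by
    intro N
    induction N with
    | zero => simp
    | succ N ih =>
      have h1 : ∀ f ∈ hilbertIdeal K', ∀ p : MvPolynomial (Fin n) k,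
          polyAct g (∑ x : K, polyAct x.1 (p * f)) - ∑ x : K, polyAct x.1 (p * f) ∈
            m ^ (N + 1) := by
        intro f hf
        refine Submodule.span_induction (p := fun f _ => ∀ p : MvPolynomial (Fin n) k,
          polyAct g (∑ x : K, polyAct x.1 (p * f)) - ∑ x : K, polyAct x.1 (p * f) ∈
            m ^ (N + 1)) ?_ ?_ ?_ ?_ hf
        · rintro F ⟨hF, hF0⟩ p
          have h2 : ∑ x : K, polyAct x.1 (p * F) = (∑ x : K, polyAct x.1 p) * F := by
            rw [Finset.sum_mul]
            exact Finset.sum_congr rfl fun x _ => by rw [map_mul, hF x.1 (hKK' x.2)]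
          rw [h2, map_mul, hF g hg, ← sub_mul, pow_succ]
          exact Ideal.mul_mem_mul (ih _ (sum_polyAct_mem K p)) hF0
        · simp
        · intro x y _ _ hx hy p
          have := add_mem (hx p) (hy p)
          simp only [mul_add, map_add, Finset.sum_add_distrib] at this ⊢
          convert this using 1
          ring
        · intro a x _ hx p
          have := hx (p * a)
          rwa [mul_assoc] at this
      intro f hf
      have hf' : f - C (constantCoeff f) ∈ invAlg K :=
        sub_mem hf ((invAlg K).algebraMap_mem _)
      have h2 := h1 _ (h (Ideal.subset_span ⟨hf', by simp⟩)) (C (Nat.card K : k)⁻¹)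
      have h3 : ∑ x : K, polyAct x.1 (C (Nat.card K : k)⁻¹ * (f - C (constantCoeff f))) =
          f - C (constantCoeff f) := by
        have : ∀ x : K, polyAct x.1 (C (Nat.card K : k)⁻¹ * (f - C (constantCoeff f))) =
            C (Nat.card K : k)⁻¹ * (f - C (constantCoeff f)) := fun x => by
          rw [map_mul, hf' x.1 x.2, ← algebraMap_eq, AlgHom.commutes]
        rw [Finset.sum_congr rfl fun x _ => this x, Finset.sum_const, Finset.card_univ,
          nsmul_eq_mul, ← Nat.card_eq_fintype_card, ← mul_assoc, ← map_natCast C, ← C_mul,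
          mul_inv_cancel₀ hmod, C_1, one_mul]
      rw [h3, map_sub, ← algebraMap_eq, AlgHom.commutes, sub_sub_sub_cancel_right] at h2
      exact h2
  have hbot : ⨅ i : ℕ, m ^ i = ⊥ := Ideal.iInf_pow_eq_bot_of_isDomain m (by
    rw [hm]; exact RingHom.ker_ne_top _)
  have : polyAct g f - f ∈ ⨅ i : ℕ, m ^ i := by
    rw [Ideal.mem_iInf]
    exact fun N => key N f hf
  rw [hbot, Ideal.mem_bot, sub_eq_zero] at this
  exact this

/-! ### Stabilizers of vectors are generated by reflections -/

/-- The stabilizer in `W` of the vector `v`. -/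
def vecStab (W : Subgroup (GL (Fin n) k)) (v : Fin n → k) : Subgroup (GL (Fin n) k) where
  carrier := {w | w ∈ W ∧ (w : Matrix (Fin n) (Fin n) k).mulVec v = v}
  mul_mem' := fun {a b} ha hb => ⟨W.mul_mem ha.1 hb.1, by
    rw [Units.val_mul, ← Matrix.mulVec_mulVec, hb.2, ha.2]⟩
  one_mem' := ⟨W.one_mem, by simp⟩
  inv_mem' := fun {a} ha => ⟨W.inv_mem ha.1, by
    conv_lhs => rw [← ha.2]
    rw [Matrix.mulVec_mulVec, ← Units.val_mul, inv_mul_cancel, Units.val_one, Matrix.one_mulVec]⟩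

lemma vecStab_le (W : Subgroup (GL (Fin n) k)) (v : Fin n → k) : vecStab W v ≤ W :=
  fun _ h => h.1

/-- The translation `f(x) ↦ f(x + v)`. -/
noncomputable def shiftBy (v : Fin n → k) :
    MvPolynomial (Fin n) k →ₐ[k] MvPolynomial (Fin n) k :=
  aeval (fun i => X i + C (v i))

lemma constantCoeff_shiftBy (v : Fin n → k) (f : MvPolynomial (Fin n) k) :
    constantCoeff (shiftBy v f) = eval v f := by
  have : (constantCoeff : MvPolynomial (Fin n) k →+* k).comp
      (shiftBy v : MvPolynomial (Fin n) k →+* _) = eval v := by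
    ext i
    · simp [shiftBy]
    · simp [shiftBy]
  exact congrArg (fun φ => φ f) this

lemma shiftBy_shiftBy_neg (v : Fin n → k) (f : MvPolynomial (Fin n) k) :
    shiftBy v (shiftBy (-v) f) = f := by
  have : (shiftBy v).comp (shiftBy (-v)) = AlgHom.id k _ := by
    ext i : 1
    simp [shiftBy, algHom_C]
  exact congrArg (fun φ => φ f) this

lemma shiftBy_polyAct {w : GL (Fin n) k} {v : Fin n → k}
    (hw : (w : Matrix (Fin n) (Fin n) k).mulVec v = v) (f : MvPolynomial (Fin n) k) :
    shiftBy v (polyAct w f) = polyAct w (shiftBy v f) := by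
  have hw' : ((w⁻¹ : GL (Fin n) k) : Matrix (Fin n) (Fin n) k).mulVec v = v := by
    conv_lhs => rw [← hw]
    rw [Matrix.mulVec_mulVec, ← Units.val_mul, inv_mul_cancel, Units.val_one, Matrix.one_mulVec]
  have : (shiftBy v).comp (polyAct w) = (polyAct w).comp (shiftBy v) := by
    ext i : 1
    have h1 : ∀ i, shiftBy v (X i) = X i + C (v i) := fun i => by simp [shiftBy]
    rw [AlgHom.comp_apply, AlgHom.comp_apply, polyAct_X, h1, map_add, polyAct_X, map_sum]
    simp only [map_smul, h1, smul_add, Finset.sum_add_distrib]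
    rw [← algebraMap_eq, AlgHom.commutes, algebraMap_eq]
    congr 1
    conv_rhs => rw [← hw']
    simp [Matrix.mulVec, dotProduct, smul_eq_C_mul]
  exact congrArg (fun φ => φ f) this

/-- Translation by `v` changes a linear form by its value at `v`. -/
lemma shiftBy_linear {v : Fin n → k} {a : MvPolynomial (Fin n) k} (ha : a.IsHomogeneous 1) :
    shiftBy v a = a + C (eval v a) := by
  have h : a ∈ Submodule.span k (Set.range (X : Fin n → MvPolynomial (Fin n) k)) := by
    rw [← homogeneousSubmodule_one_eq_span_X]
    exact ha
  refine Submodule.span_induction (p := fun a _ => shiftBy v a = a + C (eval v a))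
    ?_ ?_ ?_ ?_ h
  · rintro _ ⟨i, rfl⟩
    simp [shiftBy]
  · simp
  · intro x y _ _ hx hy
    rw [map_add, hx, hy, map_add, C_add]
    ring
  · intro c x _ hx
    rw [map_smul, hx, smul_add, smul_eval, C_mul, smul_eq_C_mul, smul_eq_C_mul]

/-- Steinberg's theorem. With `P` generated by the reflections of the stabilizer of `v`, the ideal
`I` of polynomials which near each point of the orbit of `v` lie in the (shiftByd) Hilbert ideal
of the corresponding conjugate of `P` is stable under all divided differences of `W`. By
`le_of_dividedStable` it is generated by the `F - F(v)`, `F ∈ R^W`; localizing at `v` gives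
`h_P ⊆ h_{W_v}`, so `P = W_v`. -/
theorem rootGenerated_vecStab {W : Subgroup (GL (Fin n) k)} [Finite W]
    (hmod : (Nat.card W : k) ≠ 0) (hW : RootGenerated W) (v : Fin n → k) :
    RootGenerated (vecStab W v) := by
  classical
  set G := vecStab W v with hGdef
  set P := Subgroup.closure {s | s ∈ G ∧ ∃ a, HasRoot a s} with hP
  have hGW : G ≤ W := vecStab_le W v
  have hPG : P ≤ G := (Subgroup.closure_le _).mpr fun s hs => hs.1
  have hfinG : Finite G := Finite.of_injective _ (Subgroup.inclusion_injective hGW)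
  have hfinP : Finite P := Finite.of_injective _ (Subgroup.inclusion_injective hPG)
  have hmodP : (Nat.card P : k) ≠ 0 := by
    obtain ⟨c, hc⟩ := Subgroup.card_dvd_of_le (hPG.trans hGW)
    intro h0
    apply hmod
    rw [hc, Nat.cast_mul, h0, zero_mul]
  have hnorm : ∀ g ∈ G, ∀ p ∈ P, g⁻¹ * p * g ∈ P := by
    intro g hg p hp
    have h1 : P ≤ P.comap (MulAut.conj g⁻¹).toMonoidHom := by
      refine (Subgroup.closure_le _).mpr fun s hs => ?_
      obtain ⟨hs, a, ha⟩ := hs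
      refine Subgroup.subset_closure ⟨?_, _, ha.conj g⁻¹⟩
      exact G.mul_mem (G.mul_mem (G.inv_mem hg) hs) (G.inv_mem (G.inv_mem hg))
    simpa using h1 hp
  -- `I` is the ideal of the fibre with multiplicities prescribed by `P`, `J` the fibre ideal itself
  set I : Ideal (MvPolynomial (Fin n) k) :=
    ⨅ w : W, (hilbertIdeal P).comap ((shiftBy v).comp (polyAct w.1)) with hI
  have memI : ∀ f, f ∈ I ↔ ∀ w ∈ W, shiftBy v (polyAct w f) ∈ hilbertIdeal P := by
    intro f
    rw [hI, Ideal.mem_iInf]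
    simp [Ideal.mem_comap]
  set J : Ideal (MvPolynomial (Fin n) k) :=
    Ideal.span {f | ∃ F ∈ invAlg W, f = F - C (eval v F)} with hJ
  have hCact : ∀ (w : GL (Fin n) k) (c : k), polyAct w (C c) = C c := fun w c =>
    (polyAct w).commutes c
  have hCtr : ∀ c : k, shiftBy v (C c) = C c := fun c => (shiftBy v).commutes c
  have hgen : ∀ Q : Subgroup (GL (Fin n) k), Q ≤ G → ∀ F ∈ invAlg W,
      shiftBy v (F - C (eval v F)) ∈ hilbertIdeal Q := by
    intro Q hQ F hF
    refine Ideal.subset_span ⟨fun p hp => ?_, ?_⟩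
    · rw [← shiftBy_polyAct (hQ hp).2, map_sub, hF p (hGW (hQ hp)), hCact]
    · rw [constantCoeff_shiftBy]
      simp
  have hJI : J ≤ I := by
    refine Ideal.span_le.mpr ?_
    rintro _ ⟨F, hF, rfl⟩
    rw [SetLike.mem_coe, memI]
    intro w hw
    rw [map_sub, hF w hw, hCact]
    exact hgen P hPG F hF
  have h1I : (1 : MvPolynomial (Fin n) k) ∉ I := by
    intro h
    have := (memI 1).mp h 1 W.one_mem
    rw [map_one, map_one] at this
    exact one_notMem_hilbertIdeal P this
  have hJst : ∀ g ∈ W, ∀ f ∈ J, polyAct g f ∈ J := by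
    intro g hg
    have : J ≤ J.comap (polyAct g) := by
      refine Ideal.span_le.mpr ?_
      rintro _ ⟨F, hF, rfl⟩
      rw [SetLike.mem_coe, Ideal.mem_comap, map_sub, hF g hg, hCact]
      exact Ideal.subset_span ⟨F, hF, rfl⟩
    exact fun f hf => this hf
  have hJc : ∀ F ∈ invAlg W, ∃ c : k, F - C c ∈ J := fun F hF =>
    ⟨_, Ideal.subset_span ⟨F, hF, rfl⟩⟩
  have hIact : ∀ w ∈ W, ∀ f ∈ I, polyAct w f ∈ I := by
    intro w hw f hf
    rw [memI] at hf ⊢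
    intro w' hw'
    rw [← polyAct_mul]
    exact hf _ (W.mul_mem hw' hw)
  have hloc : ∀ s ∈ W, ∀ a, HasRoot a s → ∀ f ∈ I, ∀ q, f - polyAct s f = a * q →
      shiftBy v q ∈ hilbertIdeal P := by
    intro s hs a ha f hf q hq
    have h1 : shiftBy v f ∈ hilbertIdeal P := by
      have := (memI f).mp hf 1 W.one_mem
      rwa [polyAct_one] at this
    have h2 := congrArg (shiftBy v) hq
    rw [map_sub, map_mul] at h2
    by_cases h0 : eval v a = 0
    · have hsv' : ((s⁻¹ : GL (Fin n) k) : Matrix (Fin n) (Fin n) k).mulVec v = v := by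
        funext i
        obtain ⟨r, hr⟩ := ha.2.2 (X i)
        have := congrArg (eval v) hr
        rw [map_sub, eval_polyAct, map_mul, h0, zero_mul, eval_X, eval_X, sub_eq_zero] at this
        exact this.symm
      have hsG : s ∈ G := by
        rw [← inv_mem_iff]
        exact ⟨W.inv_mem hs, hsv'⟩
      have hsP : s ∈ P := Subgroup.subset_closure ⟨hsG, a, ha⟩
      rw [shiftBy_polyAct hsG.2, shiftBy_linear ha.2.1, h0, C_0, add_zero] at h2
      exact dividedStable_hilbertIdeal P s hsP a ha _ h1 _ h2
    · refine mem_hilbertIdeal_of_mul (b := shiftBy v a) ?_ ?_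
      · rwa [constantCoeff_shiftBy]
      · rw [← h2]
        exact sub_mem h1 ((memI f).mp hf s hs)
  have hst : DividedStable W I := by
    intro s hs a ha f hf q hq
    rw [memI]
    intro w hw
    refine hloc _ (W.mul_mem (W.mul_mem hw hs) (W.inv_mem hw)) _ (ha.conj w) _
      (hIact w hw f hf) _ ?_
    rw [← polyAct_mul, inv_mul_cancel_right, polyAct_mul, ← map_sub, hq, map_mul]
  have hIJ : I ≤ J := le_of_dividedStable hmod hW hJI h1I hJst hJc hst
  have hJG : ∀ f ∈ J, shiftBy v f ∈ hilbertIdeal G := by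
    have : J ≤ (hilbertIdeal G).comap (shiftBy v) := by
      refine Ideal.span_le.mpr ?_
      rintro _ ⟨F, hF, rfl⟩
      exact hgen G le_rfl F hF
    exact fun f hf => this hf
  -- `e` separates `v` from the other points of its orbit
  obtain ⟨e, he, he'⟩ : ∃ e : MvPolynomial (Fin n) k, eval v e ≠ 0 ∧
      ∀ w ∈ W, w ∉ G → eval v (polyAct w e) = 0 := by
    have := Fintype.ofFinite W
    have h1 : ∀ w : W, ∃ p : MvPolynomial (Fin n) k, eval v p ≠ 0 ∧
        (w.1 ∉ G → eval v (polyAct w.1 p) = 0) := by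
      intro w
      by_cases hw : w.1 ∈ G
      · exact ⟨1, by simp, fun h => absurd hw h⟩
      · have h2 : ((w.1⁻¹ : GL (Fin n) k) : Matrix (Fin n) (Fin n) k).mulVec v ≠ v := by
          intro h
          apply hw
          rw [← inv_mem_iff]
          exact ⟨W.inv_mem w.2, h⟩
        obtain ⟨i, hi⟩ := Function.ne_iff.mp h2
        refine ⟨X i - C (((w.1⁻¹ : GL (Fin n) k) : Matrix (Fin n) (Fin n) k).mulVec v i), ?_,
          fun _ => ?_⟩
        · rw [map_sub, eval_X, eval_C, sub_ne_zero]
          exact hi.symm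
        · rw [eval_polyAct, map_sub, eval_X, eval_C, sub_self]
    choose p hp hp' using h1
    refine ⟨∏ w : W, p w, ?_, fun w hw hwG => ?_⟩
    · rw [map_prod]
      exact Finset.prod_ne_zero_iff.mpr fun w _ => hp w
    · rw [map_prod, map_prod]
      exact Finset.prod_eq_zero (Finset.mem_univ (⟨w, hw⟩ : W)) (hp' ⟨w, hw⟩ hwG)
  have hPGle : hilbertIdeal P ≤ hilbertIdeal G := by
    intro f hf
    have h1 : e ^ Nat.card P * shiftBy (-v) f ∈ I := by
      rw [memI]
      intro w hw
      by_cases hwG : w ∈ G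
      · rw [shiftBy_polyAct hwG.2, map_mul, shiftBy_shiftBy_neg]
        exact polyAct_mem_hilbertIdeal (hnorm w hwG) (Ideal.mul_mem_left _ _ hf)
      · rw [map_mul, map_mul, map_pow, map_pow]
        refine Ideal.mul_mem_right _ _ (pow_card_mem_hilbertIdeal P ?_)
        rw [constantCoeff_shiftBy]
        exact he' w hw hwG
    have h2 := hJG _ (hIJ h1)
    rw [map_mul, shiftBy_shiftBy_neg] at h2
    refine mem_hilbertIdeal_of_mul ?_ h2
    rw [constantCoeff_shiftBy, map_pow]
    exact pow_ne_zero _ he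
  exact le_antisymm hPG (le_of_hilbertIdeal_le hPG hmodP hPGle)

/-! ### Parabolic subgroups and the relative coinvariant ring -/

/-- The pointwise stabilizer of a subspace is generated by reflections: it is reached from `W` by
passing finitely many times to the stabilizer of a single vector. -/
lemma exists_rootGenerated_stabilizer {W : Subgroup (GL (Fin n) k)} [Finite W]
    (hmod : (Nat.card W : k) ≠ 0) (hW : RootGenerated W) (H : Submodule k (Fin n → k)) :
    ∃ Q : Subgroup (GL (Fin n) k), RootGenerated Q ∧ ∀ w, w ∈ Q ↔
      w ∈ W ∧ ∀ v ∈ H, (w : Matrix (Fin n) (Fin n) k).mulVec v = v := by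
  have key : ∀ m : ℕ, ∀ Q : Subgroup (GL (Fin n) k), Nat.card Q ≤ m → RootGenerated Q → Q ≤ W →
      (∀ w ∈ W, (∀ v ∈ H, (w : Matrix (Fin n) (Fin n) k).mulVec v = v) → w ∈ Q) →
      ∃ Q : Subgroup (GL (Fin n) k), RootGenerated Q ∧ ∀ w, w ∈ Q ↔
        w ∈ W ∧ ∀ v ∈ H, (w : Matrix (Fin n) (Fin n) k).mulVec v = v := by
    intro m
    induction m with
    | zero =>
      intro Q hQ _ hQW
      have : Finite Q := Finite.of_injective _ (Subgroup.inclusion_injective hQW)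
      have := Nat.card_pos (α := Q)
      omega
    | succ m ih =>
      intro Q hQm hQ hQW hst
      have hfin : Finite Q := Finite.of_injective _ (Subgroup.inclusion_injective hQW)
      by_cases h : ∀ w ∈ Q, ∀ v ∈ H, (w : Matrix (Fin n) (Fin n) k).mulVec v = v
      · exact ⟨Q, hQ, fun w => ⟨fun hw => ⟨hQW hw, h w hw⟩, fun hw => hst w hw.1 hw.2⟩⟩
      push Not at h
      obtain ⟨w, hw, v, hv, hwv⟩ := h
      have hmodQ : (Nat.card Q : k) ≠ 0 := by
        obtain ⟨c, hc⟩ := Subgroup.card_dvd_of_le hQW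
        intro h0
        apply hmod
        rw [hc, Nat.cast_mul, h0, zero_mul]
      refine ih (vecStab Q v) ?_ (rootGenerated_vecStab hmodQ hQ v)
        ((vecStab_le Q v).trans hQW) (fun u hu hu' => ⟨hst u hu hu', hu' v hv⟩)
      have h1 : vecStab Q v < Q := by
        refine lt_of_le_of_ne (vecStab_le Q v) fun h => hwv ?_
        rw [← h] at hw
        exact hw.2
      have h2 : Nat.card (vecStab Q v) < Nat.card Q :=
        Set.Finite.card_lt_card (Set.toFinite (Q : Set (GL (Fin n) k))) h1
      omega
  exact key _ W le_rfl hW le_rfl fun w hw _ => hw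

/-- A group fixing `V^K` pointwise fixes every `K`-invariant linear form, because the averaging
projections of `K` and of the larger group coincide. -/
lemma linear_mem_invAlg {K Q : Subgroup (GL (Fin n) k)} [Finite K] [Finite Q] (hKQ : K ≤ Q)
    (hmod : (Nat.card Q : k) ≠ 0)
    (hQ : ∀ w ∈ Q, ∀ v : Fin n → k,
      (∀ x ∈ K, (x : Matrix (Fin n) (Fin n) k).mulVec v = v) →
        (w : Matrix (Fin n) (Fin n) k).mulVec v = v)
    {a : MvPolynomial (Fin n) k} (ha : a.IsHomogeneous 1) (haK : a ∈ invAlg K) :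
    a ∈ invAlg Q := by
  have := Fintype.ofFinite K
  have := Fintype.ofFinite Q
  have hmodK : (Nat.card K : k) ≠ 0 := by
    obtain ⟨c, hc⟩ := Subgroup.card_dvd_of_le hKQ
    intro h0
    apply hmod
    rw [hc, Nat.cast_mul, h0, zero_mul]
  -- `E` is `|K|` times the projection onto `V^K`, so every `w ∈ Q` satisfies `w E = E`
  set E : Matrix (Fin n) (Fin n) k := ∑ x : K, ((x.1 : GL (Fin n) k) : Matrix _ _ k) with hE
  have hxE : ∀ x ∈ K, ((x : GL (Fin n) k) : Matrix (Fin n) (Fin n) k) * E = E := by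
    intro x hx
    rw [hE, Finset.mul_sum]
    exact Fintype.sum_equiv (Equiv.mulLeft (⟨x, hx⟩ : K)) _ _ (fun g => rfl)
  have hwE : ∀ w ∈ Q, ((w : GL (Fin n) k) : Matrix (Fin n) (Fin n) k) * E = E := by
    intro w hw
    refine Matrix.ext_of_mulVec_single fun i => ?_
    rw [← Matrix.mulVec_mulVec]
    refine hQ w hw _ fun x hx => ?_
    rw [Matrix.mulVec_mulVec, hxE x hx]
  -- the two averaging matrices agree up to the group orders
  have hEQ : (Nat.card Q : k) • E =
      (Nat.card K : k) • ∑ x : Q, ((x.1 : GL (Fin n) k) : Matrix (Fin n) (Fin n) k) := by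
    have h1 : (∑ x : Q, ((x.1 : GL (Fin n) k) : Matrix (Fin n) (Fin n) k)) * E =
        (Nat.card Q : k) • E := by
      rw [Finset.sum_mul, Finset.sum_congr rfl fun x _ => hwE x.1 x.2, Finset.sum_const,
        Finset.card_univ, Nat.card_eq_fintype_card, Nat.cast_smul_eq_nsmul]
    have h2 : (∑ x : Q, ((x.1 : GL (Fin n) k) : Matrix (Fin n) (Fin n) k)) * E =
        (Nat.card K : k) • ∑ x : Q, ((x.1 : GL (Fin n) k) : Matrix (Fin n) (Fin n) k) := by
      have h3 : ∀ y : K, (∑ x : Q, ((x.1 : GL (Fin n) k) : Matrix (Fin n) (Fin n) k)) *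
          ((y.1 : GL (Fin n) k) : Matrix (Fin n) (Fin n) k) =
          ∑ x : Q, ((x.1 : GL (Fin n) k) : Matrix (Fin n) (Fin n) k) := by
        intro y
        rw [Finset.sum_mul]
        exact Fintype.sum_equiv (Equiv.mulRight (⟨y.1, hKQ y.2⟩ : Q)) _ _ (fun g => rfl)
      rw [hE, Finset.mul_sum, Finset.sum_congr rfl fun y _ => h3 y, Finset.sum_const,
        Finset.card_univ, Nat.card_eq_fintype_card, Nat.cast_smul_eq_nsmul]
    rw [← h1, h2]
  have hEw : ∀ w ∈ Q, E * ((w : GL (Fin n) k) : Matrix (Fin n) (Fin n) k) = E := by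
    intro w hw
    have h1 : (∑ x : Q, ((x.1 : GL (Fin n) k) : Matrix (Fin n) (Fin n) k)) *
          (w : Matrix (Fin n) (Fin n) k) =
          ∑ x : Q, ((x.1 : GL (Fin n) k) : Matrix (Fin n) (Fin n) k) := by
      rw [Finset.sum_mul]
      exact Fintype.sum_equiv (Equiv.mulRight (⟨w, hw⟩ : Q)) _ _ (fun g => rfl)
    have h2 := congrArg (fun M => M * (w : Matrix (Fin n) (Fin n) k)) hEQ
    simp only [smul_mul_assoc, h1] at h2
    rw [← hEQ] at h2
    exact smul_right_injective _ hmod h2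
  -- the row vector `t` of coefficients of `a`
  have hspan : a ∈ Submodule.span k (Set.range (X : Fin n → MvPolynomial (Fin n) k)) := by
    rw [← homogeneousSubmodule_one_eq_span_X]
    exact ha
  obtain ⟨t, ht⟩ := (Submodule.mem_span_range_iff_exists_fun k).mp hspan
  have hact : ∀ w : GL (Fin n) k, polyAct w a =
      ∑ j, (Matrix.vecMul t ((w⁻¹ : GL (Fin n) k) : Matrix (Fin n) (Fin n) k)) j •
        (X j : MvPolynomial (Fin n) k) := by
    intro w
    rw [← ht, map_sum]
    simp only [map_smul, polyAct_X, Finset.smul_sum, smul_smul, Matrix.vecMul, dotProduct,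
      Finset.sum_smul]
    exact Finset.sum_comm
  have hinj : ∀ u u' : Fin n → k, ∑ j, u j • (X j : MvPolynomial (Fin n) k) =
      ∑ j, u' j • (X j : MvPolynomial (Fin n) k) → u = u' := by
    intro u u' h
    funext j
    have h1 := congrArg (coeff (Finsupp.single j 1)) h
    simpa [coeff_sum, coeff_X, Finsupp.single_left_inj] using h1
  have htK : ∀ x ∈ K, Matrix.vecMul t ((x : GL (Fin n) k) : Matrix (Fin n) (Fin n) k) = t := by
    intro x hx
    refine hinj _ _ ?_
    have := hact x⁻¹
    rw [inv_inv, haK _ (K.inv_mem hx)] at this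
    rw [← this, ht]
  have htE : Matrix.vecMul t E = (Nat.card K : k) • t := by
    rw [hE, Matrix.vecMul_sum, Finset.sum_congr rfl fun x _ => htK x.1 x.2, Finset.sum_const,
      Finset.card_univ, Nat.card_eq_fintype_card, Nat.cast_smul_eq_nsmul]
  intro w hw
  have h1 : Matrix.vecMul t ((w⁻¹ : GL (Fin n) k) : Matrix (Fin n) (Fin n) k) = t := by
    have h2 := congrArg (fun u => Matrix.vecMul u
      ((w⁻¹ : GL (Fin n) k) : Matrix (Fin n) (Fin n) k)) htE
    simp only [Matrix.vecMul_vecMul, hEw _ (Q.inv_mem hw), Matrix.smul_vecMul] at h2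
    rw [htE] at h2
    exact (smul_right_injective _ hmodK h2).symm
  rw [hact, h1, ht]

/-- If a `Q`-invariant `b` has nonzero class in `R^K_W`, and this class is killed by all
`K`-invariants of positive degree, then the reflection group `Q` is no larger than `K`: the ideal `(h_W : b)`
contains `h_K` and is stable under the divided differences of `Q`, so it is contained in `h_Q`. -/
lemma le_of_socle {K Q W : Subgroup (GL (Fin n) k)} [Finite K] [Finite Q] (hKQ : K ≤ Q)
    (hQW : Q ≤ W) (hmod : (Nat.card Q : k) ≠ 0) (hQ : RootGenerated Q)
    {b : MvPolynomial (Fin n) k} (hbQ : b ∈ invAlg Q) (hb : b ∉ hilbertIdeal W)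
    (hsoc : ∀ f ∈ invAlg K, constantCoeff f = 0 → f * b ∈ hilbertIdeal W) : Q ≤ K := by
  have hmodK : (Nat.card K : k) ≠ 0 := by
    obtain ⟨c, hc⟩ := Subgroup.card_dvd_of_le hKQ
    intro h0
    apply hmod
    rw [hc, Nat.cast_mul, h0, zero_mul]
  set I : Ideal (MvPolynomial (Fin n) k) :=
    Submodule.comap (LinearMap.mulRight (MvPolynomial (Fin n) k) b) (hilbertIdeal W) with hI
  have memI : ∀ f, f ∈ I ↔ f * b ∈ hilbertIdeal W := fun f => by
    rw [hI, Submodule.mem_comap, LinearMap.mulRight_apply]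
  have hKI : hilbertIdeal K ≤ I := by
    refine Ideal.span_le.mpr ?_
    rintro f ⟨h1, h2⟩
    exact (memI f).mpr (hsoc f h1 h2)
  have h1I : (1 : MvPolynomial (Fin n) k) ∉ I := by
    rwa [memI, one_mul]
  have hst : DividedStable Q I := by
    intro s hs a ha f hf q hq
    rw [memI] at hf ⊢
    refine dividedStable_hilbertIdeal W s (hQW hs) a ha _ hf _ ?_
    rw [map_mul, hbQ s hs, ← sub_mul, hq, mul_assoc]
  have h1 : I ≤ hilbertIdeal Q := by
    refine le_of_dividedStable hmod hQ ((hilbertIdeal_anti hKQ).trans hKI) h1I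
      (fun g hg f hf => polyAct_mem_hilbertIdeal_self hg hf) (fun F hF => ?_) hst
    refine ⟨constantCoeff F, Ideal.subset_span ⟨?_, by simp⟩⟩
    exact sub_mem hF ((invAlg Q).algebraMap_mem _)
  exact le_of_hilbertIdeal_le hKQ hmodK (hKI.trans h1)

lemma homogeneousComponent_mem_invAlg {K : Subgroup (GL (Fin n) k)} {f : MvPolynomial (Fin n) k}
    (hf : f ∈ invAlg K) (d : ℕ) : homogeneousComponent d f ∈ invAlg K := by
  intro w hw
  have h1 : polyAct w f = ∑ i ∈ Finset.range (f.totalDegree + 1),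
      polyAct w (homogeneousComponent i f) := by
    conv_lhs => rw [← sum_homogeneousComponent f, map_sum]
  have h2 := congrArg (homogeneousComponent d) h1
  rw [hf w hw, map_sum] at h2
  have h3 : ∀ i, homogeneousComponent d (polyAct w (homogeneousComponent i f)) =
      if i = d then polyAct w (homogeneousComponent i f) else 0 := fun i => by
    rw [homogeneousComponent_of_mem
      (polyAct_isHomogeneous w (homogeneousComponent_isHomogeneous i f))]
    simp only [eq_comm]
  simp only [h3, Finset.sum_ite_eq', Finset.mem_range] at h2
  split_ifs at h2 with h
  · exact h2.symm
  · rw [h2, map_zero]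

/-- Every element of a graded piece of `R^K_W` is represented by a homogeneous invariant. -/
lemma exists_of_mem_relGrading {K W : Subgroup (GL (Fin n) k)} {d : ℕ} {x : RelCoinvRing K W}
    (hx : x ∈ relGrading K W d) : ∃ f : invAlg K,
      (f : MvPolynomial (Fin n) k).IsHomogeneous d ∧ Ideal.Quotient.mk (relIdeal K W) f = x := by
  refine Submodule.span_induction (p := fun x _ => ∃ f : invAlg K,
      (f : MvPolynomial (Fin n) k).IsHomogeneous d ∧ Ideal.Quotient.mk (relIdeal K W) f = x)
      ?_ ?_ ?_ ?_ hx
  · rintro _ ⟨f, hf, rfl⟩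
    exact ⟨f, hf, rfl⟩
  · exact ⟨0, isHomogeneous_zero _ _ _, map_zero _⟩
  · rintro _ _ _ _ ⟨f, hf, rfl⟩ ⟨g, hg, rfl⟩
    exact ⟨f + g, hf.add hg, map_add _ _ _⟩
  · rintro c _ _ ⟨f, hf, rfl⟩
    refine ⟨c • f, ?_, rfl⟩
    rw [Subalgebra.coe_smul, smul_eq_C_mul]
    exact hf.C_mul c

lemma mk_eq_zero_iff {K W : Subgroup (GL (Fin n) k)} {f : invAlg K} :
    Ideal.Quotient.mk (relIdeal K W) f = 0 ↔ (f : MvPolynomial (Fin n) k) ∈ hilbertIdeal W :=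
  Ideal.Quotient.eq_zero_iff_mem

instance finite_relGrading (K W : Subgroup (GL (Fin n) k)) (d : ℕ) :
    Module.Finite k (relGrading K W d) := by
  set S : Submodule k (invAlg K) :=
    (homogeneousSubmodule (Fin n) k d).comap (invAlg K).val.toLinearMap with hS
  have h1 : Module.Finite k (homogeneousSubmodule (Fin n) k d) :=
    Module.Finite.iff_fg.mpr (homogeneousSubmodule_fg _ _ d)
  have h2 : Module.Finite k S := by
    refine Module.Finite.of_injective
      ((invAlg K).val.toLinearMap.restrict (p := S) (q := homogeneousSubmodule (Fin n) k d)
        (fun x hx => hx)) ?_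
    intro x y hxy
    have h := congrArg Subtype.val hxy
    exact Subtype.ext (Subtype.ext h)
  have h3 : relGrading K W d ≤ S.map (Ideal.Quotient.mkₐ k (relIdeal K W)).toLinearMap := by
    refine Submodule.span_le.mpr ?_
    rintro _ ⟨f, hf, rfl⟩
    exact ⟨f, hf, rfl⟩
  exact Submodule.finiteDimensional_of_le h3

end Helpers

/-- Let `V = k^n` and let `K ⊂ W ⊂ GL(V)` be finite non-modular reflection
groups (`|W|` invertible in `k`, and both `K` and `W` generated by reflections).
If `K` is not a parabolic subgroup of `W`, then the relative coinvariant ring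
`R^K_W` has no strong Lefschetz element; i.e. `R^K_W` is not strong Lefschetz. -/
theorem relCoinvariants_not_strongLefschetz_of_not_parabolic
    {k : Type} [Field k] {n : ℕ}
    (K W : Subgroup (GL (Fin n) k)) (hKW : K ≤ W) [Finite K] [Finite W]
    (hmod : (Nat.card W : k) ≠ 0)
    (hKrefl : IsReflectionGroup K) (hWrefl : IsReflectionGroup W)
    (hpar : ¬ IsParabolic K W) :
    ¬ ∃ ℓ : RelCoinvRing K W, IsSL (k := k) (relGrading K W) ℓ := by
  rintro ⟨ℓ, hℓ1, hℓ⟩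
  -- `H = V^K`, and `Q` below is its pointwise stabilizer in `W`, which is not contained in `K`
  set H : Submodule k (Fin n → k) :=
    ⨅ x : K, LinearMap.ker (Matrix.mulVecLin (x.1 : Matrix (Fin n) (Fin n) k) - LinearMap.id)
    with hH
  have memH : ∀ v, v ∈ H ↔ ∀ x ∈ K, (x : Matrix (Fin n) (Fin n) k).mulVec v = v := by
    intro v
    simp [hH, Submodule.mem_iInf, sub_eq_zero]
  obtain ⟨Q, hQgen, hQ⟩ := exists_rootGenerated_stabilizer hmod hWrefl.rootGenerated H
  have hKQ : K ≤ Q := fun x hx => (hQ x).mpr ⟨hKW hx, fun v hv => (memH v).mp hv x hx⟩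
  have hQW : Q ≤ W := fun x hx => ((hQ x).mp hx).1
  have hfinQ : Finite Q := Finite.of_injective _ (Subgroup.inclusion_injective hQW)
  have hmodQ : (Nat.card Q : k) ≠ 0 := by
    obtain ⟨c, hc⟩ := Subgroup.card_dvd_of_le hQW
    intro h0
    apply hmod
    rw [hc, Nat.cast_mul, h0, zero_mul]
  have hnle : ¬ Q ≤ K := by
    intro hle
    refine hpar ⟨H, ?_⟩
    rw [le_antisymm hKQ hle]
    ext w
    exact hQ w
  -- `d` is the top degree of `R^K_W`
  obtain ⟨N, hN⟩ := exists_homogeneous_mem_hilbertIdeal W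
  set p : ℕ → Prop := fun d => ∃ f ∈ invAlg K, f.IsHomogeneous d ∧ f ∉ hilbertIdeal W with hp
  have hp0 : p 0 := ⟨1, one_mem _, isHomogeneous_one _ _, one_notMem_hilbertIdeal W⟩
  have hpN : ∀ d, p d → d ≤ N := by
    rintro d ⟨f, -, hf, hf'⟩
    by_contra! h
    exact hf' (hN d h.le f hf)
  classical
  obtain ⟨d, hd, hdmax⟩ : ∃ d, p d ∧ ∀ d', p d' → d' ≤ d :=
    ⟨Nat.findGreatest p N, Nat.findGreatest_spec (Nat.zero_le N) hp0,
      fun d' h => Nat.le_findGreatest (hpN d' h) h⟩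
  obtain ⟨a, ha1, rfl⟩ := exists_of_mem_relGrading hℓ1
  have hpos : ∀ e, p e → 0 < Module.finrank k (relGrading K W e) := by
    rintro e ⟨f, hfK, hf, hf'⟩
    rw [Module.finrank_pos_iff_exists_ne_zero]
    refine ⟨⟨Ideal.Quotient.mk _ ⟨f, hfK⟩, Submodule.subset_span ⟨_, hf, rfl⟩⟩, fun h => hf' ?_⟩
    exact mk_eq_zero_iff.mp (congrArg Subtype.val h)
  have hb : (a : MvPolynomial (Fin n) k) ^ d ∉ hilbertIdeal W := by
    intro hmem
    have h0 : (Ideal.Quotient.mk (relIdeal K W) a) ^ d = 0 := by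
      rw [← map_pow, mk_eq_zero_iff]
      exact hmem
    have h1 := hℓ 0 d
    have h2 : (relGrading K W 0).map
        (LinearMap.mulLeft k ((Ideal.Quotient.mk (relIdeal K W) a) ^ d)) = ⊥ := by
      rw [h0, LinearMap.mulLeft_zero_eq_zero, Submodule.map_zero]
    rw [h2, finrank_bot, zero_add] at h1
    have := hpos 0 hp0
    have := hpos d hd
    omega
  have haQ : (a : MvPolynomial (Fin n) k) ∈ invAlg Q :=
    linear_mem_invAlg hKQ hmodQ
      (fun w hw v hv => ((hQ w).mp hw).2 v ((memH v).mpr hv)) ha1 a.2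
  refine hnle (le_of_socle hKQ hQW hmodQ hQgen (pow_mem haQ d) hb fun f hf hf0 => ?_)
  rw [← sum_homogeneousComponent f, Finset.sum_mul]
  refine sum_mem fun i _ => ?_
  by_cases hi : i = 0
  · rw [hi, homogeneousComponent_zero, ← constantCoeff_eq, hf0, C_0, zero_mul]
    exact zero_mem _
  by_contra hnot
  have h1 := hdmax (i + d) ⟨_, mul_mem (homogeneousComponent_mem_invAlg hf i) (pow_mem a.2 d),
    (homogeneousComponent_isHomogeneous i f).mul (by simpa using ha1.pow d), hnot⟩
  omega
end

section
/- Let k be a field of characteristic 0 and let A = k[z_1,z_2]/(z_1^3 − 3z_1z_2, z_2^3) be graded with weights w(z_1) = 1 and w(z_2) = 2. Then dim_k A = 9, the Hilbert function is H(A) = (1,1,2,1,2,1,1) (non-unimodal, so A is not strong Lefschetz), and the non-homogeneous element ℓ = z_1 + z_2 ∈ m_A has Jordan type P_ℓ = (7,2) = H(A)^∨; i.e., ℓ has strong Lefschetz Jordan type. -/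
/-!
Write `x`, `y` for the images of the variables in `A = k[z₁,z₂]/(z₁³ − 3z₁z₂, z₂³)`.  Rewriting
`x³ = 3xy` turns `x^a y^b` into `3^s x^(a-2s) y^(b+s)` with `s = (a-1)/2`, which vanishes as soon as
`b + s ≥ 3`.  The resulting normal form map `normalForm` kills the ideal, so the nine monomials
`x^i y^j`, `i, j < 3`, form a basis of `A` (`linearIndependent_monomials`, `mk_monomial`).  The
rewriting preserves the weight `a + 2b`, so `A_d` is spanned by the basis monomials with
`i + 2j = d`; this gives the Hilbert function `(1,1,2,1,2,1,1)`.  It fails unimodality at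
`2, 1, 2`.  A form `ℓ ∈ A₁` is a multiple `c x`, and `x²` maps `A₂ = ⟨x², y⟩` into the line
`⟨x² y⟩`, whereas strong Lefschetz would require rank `2`.

For the Jordan type, put `ℓ = x + y` and `v = x² - 3y - x² y / 3`.  Then `ℓ⁷ = 0` and `ℓ² v = 0`,
and `1, ℓ, …, ℓ⁶, v, ℓ v` are linearly independent, hence a basis on which `ℓ` acts by two
Jordan strings of lengths `7` and `2` (`finrank_range_of_strings`).
-/

/-- `P` is the Jordan type (multiset of Jordan block sizes) of the `k`-linear
endomorphism `f`, characterized by the ranks of the powers of `f`. -/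
def IsJordanTypeOf {k A : Type*} [Field k] [AddCommGroup A] [Module k A]
    (f : A →ₗ[k] A) (P : Multiset ℕ) : Prop :=
  (∀ p ∈ P, 0 < p) ∧
  ∀ j : ℕ, Module.finrank k (LinearMap.range (f ^ j)) = (P.map (fun p => p - j)).sum

/-- The conjugate partition of a Hilbert function `H` (whose values are bounded
by `n`): its `i`-th part (for `1 ≤ i ≤ n`) is `#{d | H d ≥ i}`; zero parts are
discarded. -/
noncomputable def conjHilb (H : ℕ → ℕ) (n : ℕ) : Multiset ℕ :=
  ((Multiset.range n).map (fun i => Set.ncard {d : ℕ | i + 1 ≤ H d})).filter (fun c => 0 < c)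

/-- A sequence of integers is unimodal. -/
def Unimodal (H : ℕ → ℕ) : Prop :=
  ∃ c : ℕ, (∀ i j : ℕ, i ≤ j → j ≤ c → H i ≤ H j) ∧ (∀ i j : ℕ, c ≤ i → i ≤ j → H j ≤ H i)

open MvPolynomial

section Generic

variable {k A ι : Type*} [Field k] [AddCommGroup A] [Module k A]

lemma finrank_span_image_basis [Fintype ι] [DecidableEq ι] (b : Module.Basis ι k A)
    (S : Finset ι) : Module.finrank k (Submodule.span k (b '' (S : Set ι))) = S.card := by
  rw [Set.image_eq_range]
  exact (finrank_span_eq_card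
    (b.linearIndependent.comp (fun i : S => (i : ι)) Subtype.val_injective)).trans
    (Fintype.card_coe S)

/-- If `f` shifts a basis consisting of two strings, of lengths `m` and `n`, then the range of
`f ^ j` is spanned by the basis vectors at position at least `j` in their string. -/
lemma finrank_range_of_strings (f : A →ₗ[k] A) (m n : ℕ) (u v : A)
    (b : Module.Basis (Fin m ⊕ Fin n) k A)
    (hb : ∀ i, b i = Sum.elim (fun i : Fin m => (f ^ (i : ℕ)) u)
      (fun i : Fin n => (f ^ (i : ℕ)) v) i)
    (hu : (f ^ m) u = 0) (hv : (f ^ n) v = 0) (j : ℕ) :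
    Module.finrank k (LinearMap.range (f ^ j)) = (m - j) + (n - j) := by
  classical
  have vanish : ∀ (w : A) (p : ℕ), (f ^ p) w = 0 → ∀ q, p ≤ q → (f ^ q) w = 0 := by
    intro w p hp q hq
    obtain ⟨r, rfl⟩ := Nat.exists_eq_add_of_le' hq
    rw [pow_add, Module.End.mul_apply, hp, map_zero]
  let S : Finset (Fin m ⊕ Fin n) :=
    (Finset.univ.filter fun i : Fin m => j ≤ i).disjSum
      (Finset.univ.filter fun i : Fin n => j ≤ i)
  have hS : LinearMap.range (f ^ j) = Submodule.span k (b '' (S : Set _)) := by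
    rw [LinearMap.range_eq_map, ← b.span_eq, Submodule.map_span]
    apply le_antisymm
    · rw [Submodule.span_le]
      rintro _ ⟨_, ⟨i, rfl⟩, rfl⟩
      rcases i with i | i
      · rw [hb, Sum.elim_inl, ← Module.End.mul_apply, ← pow_add]
        by_cases h : j + (i : ℕ) < m
        · refine Submodule.subset_span ⟨Sum.inl ⟨j + i, h⟩, ?_, by rw [hb]; rfl⟩
          simp [S]
        · rw [vanish u m hu _ (by omega)]
          exact Submodule.zero_mem _
      · rw [hb, Sum.elim_inr, ← Module.End.mul_apply, ← pow_add]
        by_cases h : j + (i : ℕ) < n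
        · refine Submodule.subset_span ⟨Sum.inr ⟨j + i, h⟩, ?_, by rw [hb]; rfl⟩
          simp [S]
        · rw [vanish v n hv _ (by omega)]
          exact Submodule.zero_mem _
    · rw [Submodule.span_le]
      rintro _ ⟨i, hi, rfl⟩
      rcases i with i | i
      · have hi' : j ≤ (i : ℕ) := by simpa [S] using hi
        refine Submodule.subset_span ⟨_, ⟨Sum.inl ⟨i - j, by omega⟩, rfl⟩, ?_⟩
        rw [hb, hb, Sum.elim_inl, Sum.elim_inl, ← Module.End.mul_apply, ← pow_add]
        congr 2
        simp only
        omega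
      · have hi' : j ≤ (i : ℕ) := by simpa [S] using hi
        refine Submodule.subset_span ⟨_, ⟨Sum.inr ⟨i - j, by omega⟩, rfl⟩, ?_⟩
        rw [hb, hb, Sum.elim_inr, Sum.elim_inr, ← Module.End.mul_apply, ← pow_add]
        congr 2
        simp only
        omega
  have card : ∀ p : ℕ, (Finset.univ.filter fun i : Fin p => j ≤ (i : ℕ)).card = p - j := by
    intro p
    rw [← Fintype.card_subtype, ← Nat.card_Ico j p, ← Fintype.card_coe]
    exact Fintype.card_congr
      { toFun := fun i => ⟨i.1, Finset.mem_Ico.2 ⟨i.2, i.1.2⟩⟩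
        invFun := fun i => ⟨⟨i.1, (Finset.mem_Ico.1 i.2).2⟩, (Finset.mem_Ico.1 i.2).1⟩
        left_inv := fun _ => rfl
        right_inv := fun _ => rfl }
  rw [hS, finrank_span_image_basis, Finset.card_disjSum, card, card]

end Generic

/-- The linear map sending a monomial `x^(m 0) y^(m 1)` to its coordinates in the monomials `x^i y^j`,
`i, j < 3`, after rewriting `x³ = 3xy` as often as possible and setting `y³ = 0`.  Here
`(m 0 - 1) / 2` is the number of rewriting steps; truncated subtraction gives `0` for `m 0 = 0`. -/
noncomputable def normalForm (k : Type*) [Field k] :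
    MvPolynomial (Fin 2) k →ₗ[k] (Fin 3 × Fin 3 → k) :=
  (basisMonomials (Fin 2) k).constr k fun m p =>
    if m 0 = p.1 + 2 * ((m 0 - 1) / 2) ∧ m 1 + (m 0 - 1) / 2 = p.2 then 3 ^ ((m 0 - 1) / 2) else 0

section Model

variable {k : Type*} [Field k]

lemma normalForm_monomial (m : Fin 2 →₀ ℕ) (c : k) (p : Fin 3 × Fin 3) :
    normalForm k (monomial m c) p = c *
    if m 0 = p.1 + 2 * ((m 0 - 1) / 2) ∧ m 1 + (m 0 - 1) / 2 = p.2
      then 3 ^ ((m 0 - 1) / 2) else 0 := by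
  have h : monomial m c = c • basisMonomials (Fin 2) k m := by
    simp [smul_monomial]
  rw [h, map_smul, normalForm, Module.Basis.constr_basis]
  rfl

lemma normalForm_of_mem {f : MvPolynomial (Fin 2) k}
    (hf : f ∈ Ideal.span {X 0 ^ 3 - 3 * (X 0 * X 1), X 1 ^ 3}) : normalForm k f = 0 := by
  obtain ⟨a, b, rfl⟩ := Ideal.mem_span_pair.1 hf
  have h1 : ∀ a : MvPolynomial (Fin 2) k,
      normalForm k (a * (X 0 ^ 3 - 3 * (X 0 * X 1))) = 0 := by
    intro a
    induction a using MvPolynomial.induction_on' with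
    | add p q hp hq => rw [add_mul, map_add, hp, hq, add_zero]
    | monomial m c =>
      have e : monomial m c * (X 0 ^ 3 - 3 * (X 0 * X 1)) =
          monomial (m + Finsupp.single 0 3) c
            - monomial (m + (Finsupp.single 0 1 + Finsupp.single 1 1)) (c * 3) := by
        have h3 : (3 : MvPolynomial (Fin 2) k) = C 3 := (map_ofNat C 3).symm
        rw [h3, mul_sub, X_pow_eq_monomial, X, X, monomial_mul, monomial_mul, C_mul_monomial,
          monomial_mul]
        simp
      ext p
      rw [e, map_sub, Pi.sub_apply, normalForm_monomial, normalForm_monomial]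
      have s : (m 0 + 3 - 1) / 2 = m 0 / 2 + 1 := by omega
      simp only [Finsupp.add_apply, Finsupp.single_apply, Pi.zero_apply]
      norm_num [s]
      split_ifs <;> first | omega | ring
  have h2 : ∀ a : MvPolynomial (Fin 2) k, normalForm k (a * X 1 ^ 3) = 0 := by
    intro a
    induction a using MvPolynomial.induction_on' with
    | add p q hp hq => rw [add_mul, map_add, hp, hq, add_zero]
    | monomial m c =>
      ext p
      rw [X_pow_eq_monomial, monomial_mul, normalForm_monomial, if_neg, mul_zero, Pi.zero_apply]
      have := p.2.isLt
      simp only [Finsupp.add_apply, Finsupp.single_apply]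
      norm_num
      omega
  rw [map_add, h1, h2, add_zero]

lemma linearIndependent_monomials (I : Ideal (MvPolynomial (Fin 2) k))
    (hI : I = Ideal.span {X 0 ^ 3 - 3 * (X 0 * X 1), X 1 ^ 3}) :
    LinearIndependent k fun p : Fin 3 × Fin 3 =>
      Ideal.Quotient.mk I (X 0) ^ (p.1 : ℕ) * Ideal.Quotient.mk I (X 1) ^ (p.2 : ℕ) := by
  rw [Fintype.linearIndependent_iff]
  intro g hg p
  have hmk : Ideal.Quotient.mk I (∑ q : Fin 3 × Fin 3,
      monomial (Finsupp.single 0 (q.1 : ℕ) + Finsupp.single 1 (q.2 : ℕ)) (g q)) = 0 := by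
    rw [← hg, map_sum]
    refine Finset.sum_congr rfl fun q _ => ?_
    rw [← map_pow, ← map_pow, ← map_mul, ← Ideal.Quotient.mkₐ_eq_mk k, ← map_smul]
    congr 1
    rw [X_pow_eq_monomial, X_pow_eq_monomial, monomial_mul, smul_monomial]
    simp
  rw [Ideal.Quotient.eq_zero_iff_mem, hI] at hmk
  have h := congrFun (normalForm_of_mem hmk) p
  rw [map_sum, Finset.sum_apply, Finset.sum_eq_single p] at h
  · rw [normalForm_monomial] at h
    have hp : ((p.1 : ℕ) - 1) / 2 = 0 := by omega
    simpa [Finsupp.single_apply, hp] using h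
  · intro q _ hq
    rw [normalForm_monomial, if_neg, mul_zero]
    have hq' : ((q.1 : ℕ) - 1) / 2 = 0 := by omega
    simp only [Finsupp.add_apply, Finsupp.single_apply]
    norm_num [hq']
    intro h1 h2
    exact hq (Prod.ext (Fin.ext h1) (Fin.ext h2))
  · simp

/-- Each monomial in `x`, `y` lies in the span of the monomials `x^i y^j`, `i, j < 3`, of the same
weight, because the rewriting `x³ = 3xy` preserves weights. -/
lemma mk_monomial {A : Type*} [CommRing A] [Algebra k A] (x y : A) (hx : x ^ 3 = 3 * (x * y))
    (hy : y ^ 3 = 0) (a b : ℕ) :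
    x ^ a * y ^ b ∈ Submodule.span k ((fun p : Fin 3 × Fin 3 => x ^ (p.1 : ℕ) * y ^ (p.2 : ℕ)) ''
      {p | (p.1 : ℕ) + 2 * p.2 = a + 2 * b}) := by
  induction a using Nat.strong_induction_on generalizing b with
  | _ a ih =>
    by_cases ha : a < 3
    · by_cases hb : b < 3
      · exact Submodule.subset_span ⟨(⟨a, ha⟩, ⟨b, hb⟩), rfl, rfl⟩
      · obtain ⟨c, rfl⟩ := Nat.exists_eq_add_of_le (not_lt.1 hb)
        rw [pow_add, hy, zero_mul, mul_zero]
        exact Submodule.zero_mem _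
    · obtain ⟨c, rfl⟩ := Nat.exists_eq_add_of_le (not_lt.1 ha)
      have h := ih (1 + c) (by omega) (b + 1)
      have e : x ^ (3 + c) * y ^ b = (3 : k) • (x ^ (1 + c) * y ^ (b + 1)) := by
        rw [Algebra.smul_def, map_ofNat]
        linear_combination (x ^ c * y ^ b) * hx
      have hw : 3 + c + 2 * b = 1 + c + 2 * (b + 1) := by ring
      rw [e, hw]
      exact Submodule.smul_mem _ _ h

/-- The ranks of the powers of `x + y`, obtained from the Jordan basis
`1, ℓ, …, ℓ⁶, v, ℓ v` with `ℓ = x + y`. -/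
lemma finrank_range_pow [CharZero k] {A : Type*} [CommRing A] [Algebra k A] (x y : A)
    (hx : x ^ 3 = 3 * (x * y)) (hy : y ^ 3 = 0) (e : Module.Basis (Fin 3 × Fin 3) k A)
    (he : ∀ p, e p = x ^ (p.1 : ℕ) * y ^ (p.2 : ℕ)) (j : ℕ) :
    Module.finrank k (LinearMap.range (LinearMap.mulLeft k (x + y) ^ j)) = (7 - j) + (2 - j) := by
  obtain ⟨t, ht⟩ : ∃ t : A, t = algebraMap k A (1 / 3) := ⟨_, rfl⟩
  have ht3 : 3 * t = 1 := by
    rw [ht, ← map_ofNat (algebraMap k A) 3, ← map_mul]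
    norm_num
  have p3 : (x + y) ^ 3 = 3 * (x * y) + 3 * (x ^ 2 * y) + 3 * (x * y ^ 2) := by
    linear_combination hx + hy
  have p4 : (x + y) ^ 4 = 3 * (x ^ 2 * y) + 12 * (x * y ^ 2) + 6 * (x ^ 2 * y ^ 2) := by
    rw [pow_succ, p3]
    linear_combination (3 * y) * hx + (3 * x) * hy
  have p5 : (x + y) ^ 5 = 9 * (x * y ^ 2) + 15 * (x ^ 2 * y ^ 2) := by
    rw [pow_succ, p4]
    linear_combination (3 * y + 6 * y ^ 2) * hx + (12 * x + 6 * x ^ 2 + 18 * x) * hy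
  have p6 : (x + y) ^ 6 = 9 * (x ^ 2 * y ^ 2) := by
    rw [pow_succ, p5]
    linear_combination (15 * y ^ 2) * hx + (9 * x + 15 * x ^ 2 + 45 * x) * hy
  have p7 : (x + y) ^ 7 = 0 := by
    rw [pow_succ, p6]
    linear_combination (9 * y ^ 2) * hx + (9 * x ^ 2 + 27 * x) * hy
  -- The generator of the short string: `x² - 3y` is annihilated by `x`, and the correction term
  -- is chosen so that `(x + y)²` kills the sum.
  obtain ⟨v, hv⟩ : ∃ v : A, v = x ^ 2 - 3 * y - t * (x ^ 2 * y) := ⟨_, rfl⟩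
  have v1 : (x + y) * v = x ^ 2 * y - 3 * y ^ 2 - x * y ^ 2 - t * (x ^ 2 * y ^ 2) := by
    rw [hv]
    linear_combination (1 - t * y) * hx - (x * y ^ 2) * ht3
  have v2 : (x + y) ^ 2 * v = 0 := by
    rw [pow_two, mul_assoc, v1]
    linear_combination (y - t * y ^ 2) * hx - (3 + x + t * x ^ 2 + 3 * t * x) * hy
  have hpow : ∀ (n : ℕ) (a : A), (LinearMap.mulLeft k (x + y) ^ n) a = (x + y) ^ n * a := by
    intro n a
    rw [LinearMap.pow_mulLeft, LinearMap.mulLeft_apply]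
  let s : Fin 7 ⊕ Fin 2 → A := Sum.elim
    (fun i : Fin 7 => (LinearMap.mulLeft k (x + y) ^ (i : ℕ)) 1)
    (fun i : Fin 2 => (LinearMap.mulLeft k (x + y) ^ (i : ℕ)) v)
  have hs : LinearIndependent k s := by
    rw [Fintype.linearIndependent_iff]
    intro g hg
    have hind := Fintype.linearIndependent_iff.1 e.linearIndependent
    simp only [s, Fintype.sum_sum_type, Sum.elim_inl, Sum.elim_inr, hpow, Fin.sum_univ_seven,
      Fin.sum_univ_two] at hg
    obtain ⟨c, hc⟩ : ∃ c : Fin 7 → k, ∀ i, g (Sum.inl i) = c i := ⟨_, fun _ => rfl⟩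
    obtain ⟨d, hd⟩ : ∃ d : Fin 2 → k, ∀ i, g (Sum.inr i) = d i := ⟨_, fun _ => rfl⟩
    simp only [hc, hd] at hg
    have key := hind (fun p => (!![c 0, c 1 - 3 * d 0, c 2 - 3 * d 1;
      c 1, 2 * c 2 + 3 * c 3, 3 * c 3 + 12 * c 4 + 9 * c 5 - d 1;
      c 2 + d 0, 3 * c 3 + 3 * c 4 - d 0 / 3 + d 1,
        6 * c 4 + 15 * c 5 + 9 * c 6 - d 1 / 3] : Matrix (Fin 3) (Fin 3) k) p.1 p.2) (by
      rw [← hg, Fintype.sum_prod_type]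
      simp only [Fin.sum_univ_three, he, Algebra.smul_def]
      have n2 : algebraMap k A 2 = 2 := map_ofNat _ 2
      have n3 : algebraMap k A 3 = 3 := map_ofNat _ 3
      have n6 : algebraMap k A 6 = 6 := map_ofNat _ 6
      have n9 : algebraMap k A 9 = 9 := map_ofNat _ 9
      have n12 : algebraMap k A 12 = 12 := map_ofNat _ 12
      have n15 : algebraMap k A 15 = 15 := map_ofNat _ 15
      have n3' : algebraMap k A (3⁻¹) = t := by rw [ht, one_div]
      simp [p3, p4, p5, p6, v1, div_eq_mul_inv, n2, n3, n6, n9, n12, n15, n3']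
      rw [hv]
      ring)
    have k00 := key (0, 0)
    have k01 := key (0, 1)
    have k02 := key (0, 2)
    have k10 := key (1, 0)
    have k11 := key (1, 1)
    have k12 := key (1, 2)
    have k20 := key (2, 0)
    have k21 := key (2, 1)
    have k22 := key (2, 2)
    simp at k00 k01 k02 k10 k11 k12 k20 k21 k22
    have hd0 : d 0 = 0 := by linear_combination (k10 - k01) / 3
    have hc2 : c 2 = 0 := by linear_combination k20 - hd0
    have hc3 : c 3 = 0 := by linear_combination (k11 - 2 * hc2) / 3
    have hd1 : d 1 = 0 := by linear_combination (hc2 - k02) / 3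
    have hc4 : c 4 = 0 := by linear_combination (k21 - 3 * hc3 + hd0 / 3 - hd1) / 3
    have hc5 : c 5 = 0 := by linear_combination (k12 - 3 * hc3 - 12 * hc4 + hd1) / 9
    have hc6 : c 6 = 0 := by linear_combination (k22 - 6 * hc4 - 15 * hc5 + hd1 / 3) / 9
    rintro (i | i)
    · rw [hc]
      fin_cases i <;> assumption
    · rw [hd]
      fin_cases i <;> assumption
  have hcard : Fintype.card (Fin 7 ⊕ Fin 2) = Module.finrank k A := by
    rw [Module.finrank_eq_card_basis e]
    rfl
  refine finrank_range_of_strings _ 7 2 1 v (basisOfLinearIndependentOfCardEqFinrank hs hcard)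
    (fun i => ?_) ?_ ?_ j
  · rw [coe_basisOfLinearIndependentOfCardEqFinrank]
  · rw [hpow, p7, zero_mul]
  · rw [hpow, v2]

end Model

/-- Let `k` be a field of characteristic 0 and let
`A = k[z₁,z₂]/(z₁³ − 3z₁z₂, z₂³)` be graded with weights `w(z₁) = 1`,
`w(z₂) = 2`.  Then `dim_k A = 9`, the Hilbert function is
`H(A) = (1,1,2,1,2,1,1)` (non-unimodal, so `A` is not strong Lefschetz), and
the non-homogeneous element `ℓ = z₁ + z₂ ∈ m_A` has Jordan type
`P_ℓ = (7,2) = H(A)^∨`; i.e. `ℓ` has strong Lefschetz Jordan type. -/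
theorem SLJT_example_z1z2
    {k : Type} [Field k] [CharZero k]
    (I : Ideal (MvPolynomial (Fin 2) k))
    (hI : I = Ideal.span {X 0 ^ 3 - 3 * (X 0 * X 1), X 1 ^ 3})
    (𝒜 : ℕ → Submodule k (MvPolynomial (Fin 2) k ⧸ I))
    (h𝒜 : ∀ d : ℕ, 𝒜 d = Submodule.span k
      ((Ideal.Quotient.mk I) '' {f | f.IsWeightedHomogeneous ![1, 2] d})) :
    Module.finrank k (MvPolynomial (Fin 2) k ⧸ I) = 9 ∧
    (Module.finrank k (𝒜 0) = 1 ∧ Module.finrank k (𝒜 1) = 1 ∧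
     Module.finrank k (𝒜 2) = 2 ∧ Module.finrank k (𝒜 3) = 1 ∧
     Module.finrank k (𝒜 4) = 2 ∧ Module.finrank k (𝒜 5) = 1 ∧
     Module.finrank k (𝒜 6) = 1 ∧ ∀ d : ℕ, 7 ≤ d → Module.finrank k (𝒜 d) = 0) ∧
    ¬ Unimodal (fun d => Module.finrank k (𝒜 d)) ∧
    (¬ ∃ ℓ, IsSL 𝒜 ℓ) ∧
    (Ideal.Quotient.mk I (X 0 + X 1) ∈
      (⨆ i : ℕ, 𝒜 (i + 1) : Submodule k (MvPolynomial (Fin 2) k ⧸ I))) ∧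
    IsJordanTypeOf (LinearMap.mulLeft k (Ideal.Quotient.mk I (X 0 + X 1)))
      ({7, 2} : Multiset ℕ) ∧
    conjHilb (fun d => Module.finrank k (𝒜 d)) 9 = ({7, 2} : Multiset ℕ) := by
  classical
  set x := Ideal.Quotient.mk I (X 0) with hxdef
  set y := Ideal.Quotient.mk I (X 1) with hydef
  have hx : x ^ 3 = 3 * (x * y) := by
    rw [← sub_eq_zero]
    have h : Ideal.Quotient.mk I (X 0 ^ 3 - 3 * (X 0 * X 1)) = 0 := by
      rw [Ideal.Quotient.eq_zero_iff_mem, hI]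
      exact Ideal.subset_span (by simp)
    rw [map_sub, map_mul, map_mul, map_pow, map_ofNat] at h
    exact h
  have hy : y ^ 3 = 0 := by
    have h : Ideal.Quotient.mk I (X 1 ^ 3) = 0 := by
      rw [Ideal.Quotient.eq_zero_iff_mem, hI]
      exact Ideal.subset_span (by simp)
    simpa using h
  have hmon : ∀ (m : Fin 2 →₀ ℕ) (c : k),
      Ideal.Quotient.mk I (monomial m c) = c • (x ^ m 0 * y ^ m 1) := by
    intro m c
    rw [hxdef, hydef, ← map_pow, ← map_pow, ← map_mul, ← Ideal.Quotient.mkₐ_eq_mk k, ← map_smul,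
      monomial_eq, Finsupp.prod_fintype _ _ (by simp), Fin.prod_univ_two, smul_eq_C_mul]
  have hspan : ⊤ ≤ Submodule.span k (Set.range fun p : Fin 3 × Fin 3 =>
      x ^ (p.1 : ℕ) * y ^ (p.2 : ℕ)) := by
    rintro a -
    obtain ⟨f, rfl⟩ := Ideal.Quotient.mk_surjective a
    rw [f.as_sum, map_sum]
    refine Submodule.sum_mem _ fun m _ => ?_
    rw [hmon]
    exact Submodule.smul_mem _ _ (Submodule.span_mono (Set.image_subset_range _ _)
      (mk_monomial x y hx hy (m 0) (m 1)))
  let e : Module.Basis (Fin 3 × Fin 3) k (MvPolynomial (Fin 2) k ⧸ I) :=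
    Module.Basis.mk (linearIndependent_monomials I hI) hspan
  have he : ∀ p, e p = x ^ (p.1 : ℕ) * y ^ (p.2 : ℕ) := fun p => by
    rw [Module.Basis.mk_apply]
  have hweight : ∀ m : Fin 2 →₀ ℕ, Finsupp.weight ![1, 2] m = m 0 + 2 * m 1 := by
    intro m
    rw [Finsupp.weight_apply, Finsupp.sum_fintype _ _ (by simp), Fin.sum_univ_two]
    simp [mul_comm]
  have hgr : ∀ d, 𝒜 d = Submodule.span k (e ''
      ((Finset.univ.filter fun p : Fin 3 × Fin 3 => (p.1 : ℕ) + 2 * p.2 = d :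
        Finset (Fin 3 × Fin 3)) : Set (Fin 3 × Fin 3))) := by
    intro d
    rw [h𝒜]
    apply le_antisymm
    · rw [Submodule.span_le]
      rintro _ ⟨f, hf, rfl⟩
      rw [f.as_sum, map_sum]
      refine Submodule.sum_mem _ fun m hm => ?_
      have hw := hf (mem_support_iff.1 hm)
      rw [hweight] at hw
      rw [hmon]
      refine Submodule.smul_mem _ _ ?_
      have h := mk_monomial (k := k) x y hx hy (m 0) (m 1)
      rw [hw] at h
      simpa [funext he] using h
    · rw [Submodule.span_le]
      rintro _ ⟨p, hp, rfl⟩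
      refine Submodule.subset_span
        ⟨monomial (Finsupp.single 0 (p.1 : ℕ) + Finsupp.single 1 (p.2 : ℕ)) 1, ?_, ?_⟩
      · refine isWeightedHomogeneous_monomial _ _ _ ?_
        rw [hweight]
        simpa [Finsupp.single_apply] using hp
      · rw [hmon, he]
        simp
  have hfin : ∀ d, Module.finrank k (𝒜 d) =
      (Finset.univ.filter fun p : Fin 3 × Fin 3 => (p.1 : ℕ) + 2 * p.2 = d).card := by
    intro d
    rw [hgr, finrank_span_image_basis]
  have hbig : ∀ d, 7 ≤ d → Module.finrank k (𝒜 d) = 0 := by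
    intro d hd
    rw [hfin, Finset.card_eq_zero, Finset.filter_eq_empty_iff]
    intro p _
    omega
  have h0 : Module.finrank k (𝒜 0) = 1 := by rw [hfin]; decide
  have h1 : Module.finrank k (𝒜 1) = 1 := by rw [hfin]; decide
  have h2 : Module.finrank k (𝒜 2) = 2 := by rw [hfin]; decide
  have h3 : Module.finrank k (𝒜 3) = 1 := by rw [hfin]; decide
  have h4 : Module.finrank k (𝒜 4) = 2 := by rw [hfin]; decide
  have h5 : Module.finrank k (𝒜 5) = 1 := by rw [hfin]; decide
  have h6 : Module.finrank k (𝒜 6) = 1 := by rw [hfin]; decide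
  refine ⟨?_, ⟨h0, h1, h2, h3, h4, h5, h6, hbig⟩, ?_, ?_, ?_, ⟨by simp, fun j => ?_⟩, ?_⟩
  · rw [Module.finrank_eq_card_basis e]
    rfl
  · rintro ⟨c, hup, hdown⟩
    rcases le_total 3 c with hc | hc
    · have := hup 2 3 (by norm_num) hc
      simp only [h2, h3] at this
      omega
    · have := hdown 3 4 hc (by norm_num)
      simp only [h3, h4] at this
      omega
  · rintro ⟨l, hl, hrank⟩
    have h := hrank 2 2
    rw [h2, h4, min_self] at h
    have f1 : (Finset.univ.filter fun p : Fin 3 × Fin 3 => (p.1 : ℕ) + 2 * p.2 = 1) =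
      {(1, 0)} := by decide
    have f2 : (Finset.univ.filter fun p : Fin 3 × Fin 3 => (p.1 : ℕ) + 2 * p.2 = 2) =
      {(2, 0), (0, 1)} := by decide
    rw [hgr, f1, Finset.coe_singleton, Set.image_singleton, he, Submodule.mem_span_singleton] at hl
    -- The form is now `c x`, whose square maps both `x²` and `y` into the line `⟨x² y⟩`.
    obtain ⟨c, rfl⟩ := hl
    have hsmul : ∀ (r : k) (a : MvPolynomial (Fin 2) k ⧸ I), r • a =
      algebraMap k (MvPolynomial (Fin 2) k ⧸ I) r * a := fun r a => Algebra.smul_def r a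
    have hle : (𝒜 2).map (LinearMap.mulLeft k
        ((c • (x ^ ((1 : Fin 3) : ℕ) * y ^ ((0 : Fin 3) : ℕ))) ^ 2)) ≤
        Submodule.span k {x ^ 2 * y} := by
      rw [hgr, f2, Submodule.map_span, Submodule.span_le]
      rintro _ ⟨_, ⟨p, hp, rfl⟩, rfl⟩
      rw [he]
      have hp' : p = (2, 0) ∨ p = (0, 1) := by simpa using hp
      rw [SetLike.mem_coe, Submodule.mem_span_singleton]
      rcases hp' with rfl | rfl
      · refine ⟨3 * c ^ 2, ?_⟩
        simp only [hsmul, LinearMap.mulLeft_apply, map_mul, map_pow, map_ofNat]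
        simp
        linear_combination (-(algebraMap k (MvPolynomial (Fin 2) k ⧸ I) c) ^ 2 * x) * hx
      · refine ⟨c ^ 2, ?_⟩
        simp only [hsmul, LinearMap.mulLeft_apply, map_pow]
        simp
        ring
    have hle2 := Submodule.finrank_mono hle
    rw [h] at hle2
    have := finrank_span_le_card (R := k) ({x ^ 2 * y} : Set (MvPolynomial (Fin 2) k ⧸ I))
    simp only [Set.toFinset_singleton, Finset.card_singleton] at this
    omega
  · rw [map_add]
    refine Submodule.add_mem _ (Submodule.mem_iSup_of_mem 0 ?_) (Submodule.mem_iSup_of_mem 1 ?_)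
    · rw [hgr]
      exact Submodule.subset_span ⟨(1, 0), by simp, by simp [he, hxdef]⟩
    · rw [hgr]
      exact Submodule.subset_span ⟨(0, 1), by simp, by simp [he, hydef]⟩
  · rw [map_add, finrank_range_pow x y hx hy e he j]
    simp
  · have hset : ∀ i : ℕ, Set.ncard {d : ℕ | i + 1 ≤ Module.finrank k (𝒜 d)} =
        ((Finset.range 7).filter fun d => i + 1 ≤
          (Finset.univ.filter fun p : Fin 3 × Fin 3 => (p.1 : ℕ) + 2 * p.2 = d).card).card := by
      intro i
      rw [← Set.ncard_coe_finset]
      congr 1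
      ext d
      simp only [Set.mem_ofPred_eq, Finset.coe_filter, Finset.mem_range, ← hfin]
      refine ⟨fun h => ⟨?_, h⟩, fun h => h.2⟩
      by_contra hd
      rw [hbig d (by omega)] at h
      omega
    simp only [conjHilb, hset]
    decide
end
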